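/- arXiv:math/9905209 — 4 statements merged into one kernel-verified Lean document; each statement's English description precedes it below -/
import Mathlib

section
/- If H is a finitely generated subgroup of M(Φ) that contains t, then there exist finite tuples a_1, …, a_m ∈ 𝔽 and b_1, …, b_r ∈ 𝔽 and elements w_1, …, w_m of the free group on generators x_1, …, x_m, y_1, …, y_r such that: (i) H is generated by {t} ∪ {ι(a_1), …, ι(a_m)}; (ii) for each j, evaluating w_j under x_j ↦ a_j, y_k ↦ b_k gives Φ(a_j) in 𝔽; (iii) the subgroup of 𝔽 generated by {a_1, …, a_m} ∪ {Φ(a_1), …, Φ(a_m)} equals the subgroup generated by {a_1, …, a_m} ∪ {b_1, …, b_r}; and (iv) the map sending s ↦ t, x_j ↦ ι(a_j), y_k ↦ ι(b_k) induces a group isomorphism from the group with presentation ⟨s, x_1, …, x_m, y_1, …, y_r | s x_j s⁻¹ w_j⁻¹ (1 ≤ j ≤ m)⟩ onto H. -/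
/-- The relators `t eᵢ t⁻¹ Φ(eᵢ)⁻¹` of the mapping torus of an endomorphism `Φ` of the
free group on `I`; the generator `none` plays the role of the stable letter `t`. -/
def mtRels {I : Type} (Φ : FreeGroup I →* FreeGroup I) : Set (FreeGroup (Option I)) :=
  Set.range fun i : I =>
    FreeGroup.of (none : Option I) * FreeGroup.of (some i) * (FreeGroup.of (none : Option I))⁻¹ *
      (FreeGroup.map some (Φ (FreeGroup.of i)))⁻¹

/-- The mapping torus `M(Φ) = ⟨t, eᵢ (i ∈ I) | t eᵢ t⁻¹ Φ(eᵢ)⁻¹ (i ∈ I)⟩`. -/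
abbrev MT {I : Type} (Φ : FreeGroup I →* FreeGroup I) : Type := PresentedGroup (mtRels Φ)

/-- The stable letter `t` of the mapping torus. -/
def mtT {I : Type} (Φ : FreeGroup I →* FreeGroup I) : MT Φ := PresentedGroup.of none

/-- The natural homomorphism `ι : 𝔽 → M(Φ)`. -/
def mtι {I : Type} (Φ : FreeGroup I →* FreeGroup I) : FreeGroup I →* MT Φ :=
  (PresentedGroup.mk (mtRels Φ)).comp (FreeGroup.map some)

/-- The relators `s x_j s⁻¹ w_j⁻¹ (1 ≤ j ≤ m)` of a preferred presentation
`⟨s, x₁, …, x_m, y₁, …, y_r | s x_j s⁻¹ w_j⁻¹⟩`: the generator `none` is the stable letter `s`,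
`some (Sum.inl j)` is `x_j` and `some (Sum.inr k)` is `y_k`. -/
def prefRels (m r : ℕ) (w : Fin m → FreeGroup (Fin m ⊕ Fin r)) :
    Set (FreeGroup (Option (Fin m ⊕ Fin r))) :=
  Set.range fun j : Fin m =>
    FreeGroup.of (none : Option (Fin m ⊕ Fin r)) * FreeGroup.of (some (Sum.inl j)) *
      (FreeGroup.of (none : Option (Fin m ⊕ Fin r)))⁻¹ *
      (FreeGroup.map some (w j))⁻¹


namespace MTProof

section residual

/-- free groups are residually finite -/
lemma exists_finite_quot {α : Type} (w : FreeGroup α) (hw : w ≠ 1) :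
    ∃ (X : Type) (_ : Finite X) (ψ : FreeGroup α →* Equiv.Perm X), ψ w ≠ 1 := by
  classical
  let S : Finset (FreeGroup α) := (w.toWord.tails.map FreeGroup.mk).toFinset
  have hS : ∀ L : List (α × Bool), L <:+ w.toWord → FreeGroup.mk L ∈ S := by
    intro L hL
    simp only [S, List.mem_toFinset, List.mem_map, List.mem_tails]
    exact ⟨L, hL, rfl⟩
  have key : ∀ a : α, ∃ e : Equiv.Perm S, ∀ x y : S, (y : FreeGroup α) = FreeGroup.of a * (x : FreeGroup α) →
      e x = y := by
    intro a
    let e0 : {x : S // FreeGroup.of a * (x : FreeGroup α) ∈ S} ≃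
        {x : S // (FreeGroup.of a)⁻¹ * (x : FreeGroup α) ∈ S} :=
      { toFun := fun x => ⟨⟨FreeGroup.of a * (x.1 : FreeGroup α), x.2⟩, by simp⟩
        invFun := fun x => ⟨⟨(FreeGroup.of a)⁻¹ * (x.1 : FreeGroup α), x.2⟩, by simp⟩
        left_inv := fun x => by ext; simp
        right_inv := fun x => by ext; simp }
    refine ⟨e0.extendSubtype, fun x y h => ?_⟩
    have hx : FreeGroup.of a * (x : FreeGroup α) ∈ S := h ▸ y.2
    rw [Equiv.extendSubtype_apply_of_mem e0 x hx]
    ext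
    exact h.symm
  choose e he using key
  have he' : ∀ a (x y : S), (y : FreeGroup α) = (FreeGroup.of a)⁻¹ * (x : FreeGroup α) → (e a)⁻¹ x = y := by
    intro a x y h
    rw [Equiv.Perm.inv_eq_iff_eq]
    exact (he a y x (by rw [h]; simp)).symm
  let ψ : FreeGroup α →* Equiv.Perm S := FreeGroup.lift e
  refine ⟨S, inferInstance, ψ, fun h => hw ?_⟩
  have main : ∀ (L : List (α × Bool)) (hL : L <:+ w.toWord),
      ψ (FreeGroup.mk L) ⟨1, hS [] (List.nil_suffix)⟩ = ⟨FreeGroup.mk L, hS L hL⟩ := by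
    intro L
    induction L with
    | nil =>
      intro hL
      have h0 : ψ (FreeGroup.mk []) = 1 := by rw [← FreeGroup.one_eq_mk]; simp
      rw [h0]; rfl
    | cons l L ih =>
      intro hL
      have hL' : L <:+ w.toWord := (List.suffix_cons l L).trans hL
      have h1 : FreeGroup.mk (l :: L) = FreeGroup.mk [l] * FreeGroup.mk L := by
        rw [FreeGroup.mul_mk]; rfl
      have h2 := ih hL'
      obtain ⟨a, b⟩ := l
      cases b
      · have h3 : FreeGroup.mk [(a, false)] = (FreeGroup.of a)⁻¹ := rfl
        rw [show ψ (FreeGroup.mk ((a, false) :: L)) = (e a)⁻¹ * ψ (FreeGroup.mk L) by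
          rw [h1, h3, map_mul, map_inv]; simp [ψ]]
        rw [Equiv.Perm.mul_apply, h2]
        apply he'
        simp [h1, h3]
      · have h3 : FreeGroup.mk [(a, true)] = (FreeGroup.of a) := rfl
        rw [show ψ (FreeGroup.mk ((a, true) :: L)) = (e a) * ψ (FreeGroup.mk L) by
          rw [h1, h3, map_mul]; simp [ψ]]
        rw [Equiv.Perm.mul_apply, h2]
        apply he
        simp [h1, h3]
  have := main w.toWord (List.suffix_refl _)
  have := congrArg Subtype.val this
  simp only [FreeGroup.mk_toWord, h] at this
  simpa using this.symm

lemma hopf {α : Type} [Finite α] (f : FreeGroup α →* FreeGroup α)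
    (hf : Function.Surjective f) : Function.Injective f := by
  rw [injective_iff_map_eq_one]
  intro w hw
  by_contra hne
  obtain ⟨X, hX, ψ, hψ⟩ := exists_finite_quot w hne
  have hfin : Finite (FreeGroup α →* Equiv.Perm X) :=
    Finite.of_equiv (α → Equiv.Perm X) FreeGroup.lift
  have hinj : Function.Injective (fun g : FreeGroup α →* Equiv.Perm X => g.comp f) := by
    intro g g' h
    exact (MonoidHom.cancel_right hf).1 h
  obtain ⟨g, hg⟩ := (Finite.injective_iff_surjective.1 hinj) ψ
  apply hψ
  rw [← hg]
  simp [hw]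

end residual

section homOn

variable {G : Type} [Group G]

/-- `h` restricted to `K` is a homomorphism. -/
def HomOn {T : Type} [Group T] (K : Subgroup G) (h : G → T) : Prop :=
  ∀ x ∈ K, ∀ y ∈ K, h (x * y) = h x * h y

lemma HomOn.mono {T : Type} [Group T] {K K' : Subgroup G} {h : G → T} (hh : HomOn K h)
    (hK : K' ≤ K) : HomOn K' h := fun x hx y hy => hh x (hK hx) y (hK hy)

lemma HomOn.one {T : Type} [Group T] {K : Subgroup G} {h : G → T} (hh : HomOn K h) :
    h 1 = 1 := by
  have := hh 1 K.one_mem 1 K.one_mem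
  simpa using this

lemma HomOn.inv {T : Type} [Group T] {K : Subgroup G} {h : G → T} (hh : HomOn K h)
    {x : G} (hx : x ∈ K) : h x⁻¹ = (h x)⁻¹ := by
  have := hh x hx x⁻¹ (K.inv_mem hx)
  rw [mul_inv_cancel, hh.one] at this
  exact (inv_eq_of_mul_eq_one_right this.symm).symm

lemma HomOn.mem {T : Type} [Group T] {S : Set G} {h : G → T}
    (hh : HomOn (Subgroup.closure S) h) (B : Subgroup T) (hS : ∀ x ∈ S, h x ∈ B) :
    ∀ x ∈ Subgroup.closure S, h x ∈ B := by
  intro x hx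
  induction hx using Subgroup.closure_induction with
  | mem x hx => exact hS x hx
  | one => rw [hh.one]; exact B.one_mem
  | mul x y hx hy h1 h2 => rw [hh x hx y hy]; exact B.mul_mem h1 h2
  | inv x hx h1 => rw [hh.inv hx]; exact B.inv_mem h1

lemma HomOn.eqOn {T : Type} [Group T] {S : Set G} {h h' : G → T}
    (hh : HomOn (Subgroup.closure S) h) (hh' : HomOn (Subgroup.closure S) h')
    (hS : ∀ x ∈ S, h x = h' x) : ∀ x ∈ Subgroup.closure S, h x = h' x := by
  intro x hx
  induction hx using Subgroup.closure_induction with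
  | mem x hx => exact hS x hx
  | one => rw [hh.one, hh'.one]
  | mul x y hx hy h1 h2 => rw [hh x hx y hy, hh' x hx y hy, h1, h2]
  | inv x hx h1 => rw [hh.inv hx, hh'.inv hx, h1]

lemma homOn_hom {T : Type} [Group T] (K : Subgroup G) (φ : G →* T) : HomOn K φ :=
  fun x _ y _ => map_mul φ x y

lemma homOn_of_hom {T : Type} [Group T] (K : Subgroup G) (φ : K →* T) :
    ∃ h : G → T, HomOn K h ∧ ∀ x : K, h x = φ x := by
  classical
  refine ⟨fun x => if hx : x ∈ K then φ ⟨x, hx⟩ else 1, ?_, ?_⟩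
  · intro x hx y hy
    simp only [hx, hy, K.mul_mem hx hy, dif_pos]
    rw [← map_mul]; rfl
  · intro x; simp

/-- the family `f` is a free basis of the subgroup it generates. -/
def FreeOn {α : Type} (f : α → G) : Prop := Function.Injective (FreeGroup.lift f)

lemma FreeOn.extend {α : Type} {f : α → G} (hf : FreeOn f) {T : Type} [Group T] (u : α → T) :
    ∃ h : G → T, HomOn (Subgroup.closure (Set.range f)) h ∧ ∀ a, h (f a) = u a := by
  rw [← FreeGroup.range_lift_eq_closure]
  let e := MonoidHom.ofInjective hf
  obtain ⟨h, h1, h2⟩ := homOn_of_hom (FreeGroup.lift f).range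
    ((FreeGroup.lift u).comp e.symm.toMonoidHom)
  refine ⟨h, h1, fun a => ?_⟩
  have : f a = (e (FreeGroup.of a) : G) :=
    (FreeGroup.lift_apply_of (f := f) (x := a)).symm
  rw [this, h2]
  simp

lemma freeOn_of_extend {α : Type} {f : α → G} (h : G → FreeGroup α)
    (hh : HomOn (Subgroup.closure (Set.range f)) h) (hf : ∀ a, h (f a) = FreeGroup.of a) :
    FreeOn f := by
  have key : ∀ x, h (FreeGroup.lift f x) = x := by
    intro x
    have hr : ∀ x, FreeGroup.lift f x ∈ Subgroup.closure (Set.range f) := by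
      intro x; rw [← FreeGroup.range_lift_eq_closure]; exact ⟨x, rfl⟩
    induction x using FreeGroup.induction_on with
    | C1 => rw [map_one, hh.one]
    | of a => simp [hf]
    | inv_of a ih => rw [map_inv, hh.inv (hr _), ih]
    | mul x y hx hy => rw [map_mul, hh _ (hr _) _ (hr _), hx, hy]
  exact Function.LeftInverse.injective key

lemma exists_freeOn {I : Type} (K : Subgroup (FreeGroup I)) :
    ∃ (α : Type) (f : α → FreeGroup I), FreeOn f ∧ Subgroup.closure (Set.range f) = K := by
  let e := IsFreeGroup.mulEquiv K
  refine ⟨IsFreeGroup.Generators K, fun a => (e (FreeGroup.of a) : FreeGroup I), ?_, ?_⟩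
  · have : FreeGroup.lift (fun a => (e (FreeGroup.of a) : FreeGroup I)) =
      K.subtype.comp e.toMonoidHom := by ext; simp
    unfold FreeOn
    rw [this]
    exact Subtype.val_injective.comp e.injective
  · rw [← FreeGroup.range_lift_eq_closure]
    have : FreeGroup.lift (fun a => (e (FreeGroup.of a) : FreeGroup I)) =
      K.subtype.comp e.toMonoidHom := by ext; simp
    rw [this, MonoidHom.range_comp]
    have : e.toMonoidHom.range = ⊤ := MonoidHom.range_eq_top.2 e.surjective
    rw [this, ← MonoidHom.range_eq_map, Subgroup.range_subtype]

lemma homOn_span {V : Type} [AddCommGroup V] [Module ℚ V] {S : Set G}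
    {θ : G → Multiplicative V} (hθ : HomOn (Subgroup.closure S) θ) (N : Submodule ℚ V)
    (hS : ∀ x ∈ S, (θ x).toAdd ∈ N) : ∀ x ∈ Subgroup.closure S, (θ x).toAdd ∈ N := by
  intro x hx
  exact hθ.mem (AddSubgroup.toSubgroup N.toAddSubgroup) hS x hx

lemma freeOn_card_le {α : Type} {f : α → G} (hf : FreeOn f) {k : ℕ} (v : Fin k → G)
    (hv : Subgroup.closure (Set.range v) = Subgroup.closure (Set.range f)) :
    Finite α ∧ Nat.card α ≤ k := by
  obtain ⟨θ, h1, h2⟩ := hf.extend (T := Multiplicative (α →₀ ℚ))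
    (fun a => Multiplicative.ofAdd (Finsupp.single a 1))
  let N : Submodule ℚ (α →₀ ℚ) := Submodule.span ℚ (Set.range fun i => (θ (v i)).toAdd)
  have hN : ∀ x ∈ Subgroup.closure (Set.range v), (θ x).toAdd ∈ N := by
    apply homOn_span (by rwa [hv])
    rintro _ ⟨i, rfl⟩
    exact Submodule.subset_span ⟨i, rfl⟩
  have hli : LinearIndependent ℚ (fun a : α => (Finsupp.single a 1 : α →₀ ℚ)) :=
    Finsupp.linearIndependent_single_one ℚ α
  have hmem : ∀ a : α, (Finsupp.single a 1 : α →₀ ℚ) ∈ N := by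
    intro a
    have := hN (f a) (by rw [hv]; exact Subgroup.subset_closure ⟨a, rfl⟩)
    rw [h2] at this
    simpa using this
  have hle : Set.range (fun a : α => (Finsupp.single a 1 : α →₀ ℚ)) ≤
      Submodule.span ℚ (Set.range fun i => (θ (v i)).toAdd) := by
    rintro _ ⟨a, rfl⟩; exact hmem a
  have hfin : Finite α := hli.finite_of_le_span_finite _ _ hle
  refine ⟨hfin, ?_⟩
  have := Fintype.ofFinite α
  rw [Nat.card_eq_fintype_card]
  have h3 := linearIndependent_le_span' _ hli (Set.range fun i => (θ (v i)).toAdd) hle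
  have h4 : (Cardinal.mk α : Cardinal) ≤ (k : Cardinal) := by
    refine h3.trans ?_
    have := Fintype.card_range_le (fun i => (θ (v i)).toAdd)
    simp at this ⊢
    exact_mod_cast this
  simpa using h4

end homOn
end MTProof


namespace MTProof

section freeFactor

variable {G : Type} [Group G]

/-- `G0` is the internal free product of `K` and `C`. -/
def FP (K C G0 : Subgroup G) : Prop :=
  K ⊔ C = G0 ∧ ∀ (T : Type) [Group T] (p q : G → T), HomOn K p → HomOn C q →
    ∃ h : G → T, HomOn G0 h ∧ (∀ x ∈ K, h x = p x) ∧ ∀ x ∈ C, h x = q x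

/-- `K` is a free factor of `G0`. -/
def FF (K G0 : Subgroup G) : Prop := ∃ C, FP K C G0

lemma FP.le_left {K C G0 : Subgroup G} (h : FP K C G0) : K ≤ G0 := h.1 ▸ le_sup_left
lemma FP.le_right {K C G0 : Subgroup G} (h : FP K C G0) : C ≤ G0 := h.1 ▸ le_sup_right
lemma FF.le {K G0 : Subgroup G} (h : FF K G0) : K ≤ G0 := h.choose_spec.le_left

lemma FP.symm {K C G0 : Subgroup G} (h : FP K C G0) : FP C K G0 := by
  refine ⟨by rw [sup_comm, h.1], fun T _ p q hp hq => ?_⟩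
  obtain ⟨f, h1, h2, h3⟩ := h.2 T q p hq hp
  exact ⟨f, h1, h3, h2⟩

lemma HomOn.eqOn_sup {T : Type} [Group T] {K C : Subgroup G} {h h' : G → T}
    (hh : HomOn (K ⊔ C) h) (hh' : HomOn (K ⊔ C) h')
    (h1 : ∀ x ∈ K, h x = h' x) (h2 : ∀ x ∈ C, h x = h' x) : ∀ x ∈ K ⊔ C, h x = h' x := by
  rw [Subgroup.sup_eq_closure] at *
  apply hh.eqOn hh'
  rintro x (hx | hx)
  · exact h1 x hx
  · exact h2 x hx

lemma FF.refl (K : Subgroup G) : FF K K := by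
  refine ⟨⊥, by simp, fun T _ p q hp hq => ⟨p, hp, fun _ _ => rfl, ?_⟩⟩
  intro x hx
  rw [Subgroup.mem_bot] at hx
  rw [hx, hp.one, hq.one]

lemma FP.trans {D C' R C G0 : Subgroup G} (h : FP D C' R) (h' : FP R C G0) :
    FP D (C' ⊔ C) G0 := by
  refine ⟨by rw [← sup_assoc, h.1, h'.1], fun T _ p q hp hq => ?_⟩
  obtain ⟨u, u1, u2, u3⟩ := h.2 T p q hp (hq.mono le_sup_left)
  obtain ⟨v, v1, v2, v3⟩ := h'.2 T u q u1 (hq.mono le_sup_right)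
  refine ⟨v, v1, fun x hx => by rw [v2 x (h.le_left hx), u2 x hx], ?_⟩
  apply HomOn.eqOn_sup _ hq
  · intro x hx
    rw [v2 x (h.le_right hx), u3 x hx]
  · exact v3
  · exact v1.mono (sup_le (h.le_right.trans h'.le_left) h'.le_right)

lemma FF.trans {D R G0 : Subgroup G} (h : FF D R) (h' : FF R G0) : FF D G0 := by
  obtain ⟨C', h⟩ := h
  obtain ⟨C, h'⟩ := h'
  exact ⟨_, h.trans h'⟩

lemma FF.map {L : Type} [Group L] (F : L →* G) (hF : Function.Injective F) {K G0 : Subgroup L}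
    (h : FF K G0) : FF (K.map F) (G0.map F) := by
  obtain ⟨C, h⟩ := h
  refine ⟨C.map F, by rw [← Subgroup.map_sup, h.1], fun T _ p q hp hq => ?_⟩
  obtain ⟨u, u1, u2, u3⟩ := h.2 T (p ∘ F) (q ∘ F)
    (fun x hx y hy => by
      simp only [Function.comp, map_mul]
      exact hp _ (Subgroup.mem_map_of_mem F hx) _ (Subgroup.mem_map_of_mem F hy))
    (fun x hx y hy => by
      simp only [Function.comp, map_mul]
      exact hq _ (Subgroup.mem_map_of_mem F hx) _ (Subgroup.mem_map_of_mem F hy))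
  have hl : ∀ x, Function.invFun F (F x) = x := Function.leftInverse_invFun hF
  refine ⟨fun x => u (Function.invFun F x), ?_, ?_, ?_⟩
  · rintro _ ⟨x, hx, rfl⟩ _ ⟨y, hy, rfl⟩
    simp only
    rw [← map_mul, hl, hl, hl]
    exact u1 x hx y hy
  · rintro _ ⟨x, hx, rfl⟩
    simp only [hl]
    exact u2 x hx
  · rintro _ ⟨x, hx, rfl⟩
    simp only [hl]
    exact u3 x hx

lemma FF.gen {D G0 : Subgroup G} (h : FF D G0) {k : ℕ} (v : Fin k → G)
    (hv : Subgroup.closure (Set.range v) = G0) :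
    ∃ v' : Fin k → G, Subgroup.closure (Set.range v') = D := by
  obtain ⟨C, h⟩ := h
  obtain ⟨u, u1, u2, u3⟩ := h.2 G id (fun _ => 1) (fun _ _ _ _ => rfl) (fun _ _ _ _ => by simp)
  refine ⟨u ∘ v, le_antisymm ?_ ?_⟩
  · rw [Subgroup.closure_le]
    rintro _ ⟨i, rfl⟩
    have h1 : G0 = Subgroup.closure (D ∪ C : Set G) := by rw [← Subgroup.sup_eq_closure, h.1]
    have h2 : v i ∈ G0 := by rw [← hv]; exact Subgroup.subset_closure ⟨i, rfl⟩
    rw [h1] at u1 h2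
    refine u1.mem D ?_ _ h2
    rintro x (hx | hx)
    · rw [u2 x hx]; exact hx
    · rw [u3 x hx]; exact D.one_mem
  · intro x hx
    rw [show x = u x from (u2 x hx).symm]
    rw [← hv] at u1
    apply u1.mem
    · rintro _ ⟨i, rfl⟩; exact Subgroup.subset_closure ⟨i, rfl⟩
    · rw [hv]; exact h.le_left hx

lemma closure_range_sumElim {α β : Type} (f : α → G) (g : β → G) :
    Subgroup.closure (Set.range (Sum.elim f g)) =
      Subgroup.closure (Set.range f) ⊔ Subgroup.closure (Set.range g) := by
  rw [Set.Sum.elim_range, Subgroup.closure_union]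

lemma FP.freeOn {D C G0 : Subgroup G} (h : FP D C G0) {α β : Type} {f : α → G} {g : β → G}
    (hf : FreeOn f) (hg : FreeOn g) (hfD : Subgroup.closure (Set.range f) = D)
    (hgC : Subgroup.closure (Set.range g) = C) : FreeOn (Sum.elim f g) := by
  obtain ⟨p, p1, p2⟩ := hf.extend (fun a => FreeGroup.of (Sum.inl a : α ⊕ β))
  obtain ⟨q, q1, q2⟩ := hg.extend (fun a => FreeGroup.of (Sum.inr a : α ⊕ β))
  rw [hfD] at p1
  rw [hgC] at q1
  obtain ⟨u, u1, u2, u3⟩ := h.2 _ p q p1 q1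
  apply freeOn_of_extend u
  · rw [closure_range_sumElim, hfD, hgC, h.1]; exact u1
  · rintro (a | a)
    · rw [Sum.elim_inl, u2 _ (by rw [← hfD]; exact Subgroup.subset_closure ⟨a, rfl⟩), p2]
    · rw [Sum.elim_inr, u3 _ (by rw [← hgC]; exact Subgroup.subset_closure ⟨a, rfl⟩), q2]

end freeFactor

section kurosh

variable {ι : Type}

lemma mk_cons (l : ι × Bool) (w : List (ι × Bool)) :
    FreeGroup.mk (l :: w) = FreeGroup.mk [l] * FreeGroup.mk w := by
  rw [FreeGroup.mul_mk]; rfl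

lemma exists_step (K : Subgroup (FreeGroup ι)) (s : Set ι) :
    ∃ c : (FreeGroup ι ⧸ K) → ℕ ×ₗ ℕ, ∀ x : FreeGroup ι ⧸ K, x ≠ ((1 : FreeGroup ι) : FreeGroup ι ⧸ K) →
      ∃ (l : ι × Bool) (y : FreeGroup ι ⧸ K), x = FreeGroup.mk [l] • y ∧ c y < c x ∧
        ((∃ q ∈ Subgroup.closure (FreeGroup.of '' s), x = ((q : FreeGroup ι) : FreeGroup ι ⧸ K)) → l.1 ∈ s) := by
  classical
  let x0 : FreeGroup ι ⧸ K := ((1 : FreeGroup ι) : FreeGroup ι ⧸ K)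
  let cost : List (ι × Bool) → ℕ ×ₗ ℕ := fun w =>
    toLex ((w.filter (fun l => l.1 ∉ s)).length, w.length)
  let Sx : (FreeGroup ι ⧸ K) → Set (ℕ ×ₗ ℕ) := fun x => {n | ∃ w, FreeGroup.mk w • x0 = x ∧ cost w = n}
  have hne : ∀ x, (Sx x).Nonempty := by
    intro x
    obtain ⟨g, rfl⟩ := QuotientGroup.mk_surjective x
    refine ⟨cost g.toWord, g.toWord, ?_, rfl⟩
    rw [FreeGroup.mk_toWord]
    simp [x0]
  have wf : WellFounded ((· < ·) : ℕ ×ₗ ℕ → ℕ ×ₗ ℕ → Prop) := wellFounded_lt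
  let c : (FreeGroup ι ⧸ K) → ℕ ×ₗ ℕ := fun x => wf.min (Sx x) (hne x)
  have hle : ∀ w, c (FreeGroup.mk w • x0) ≤ cost w := by
    intro w
    have hm : cost w ∈ Sx (FreeGroup.mk w • x0) := ⟨w, rfl, rfl⟩
    exact not_lt.1 (wf.not_lt_min _ hm)
  refine ⟨c, fun x hx => ?_⟩
  obtain ⟨w, hw, hcw⟩ := wf.min_mem (Sx x) (hne x)
  match w with
  | [] =>
    exfalso; apply hx
    rw [← hw, ← FreeGroup.one_eq_mk, one_smul]
  | l :: w =>
    refine ⟨l, FreeGroup.mk w • x0, ?_, ?_, ?_⟩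
    · rw [← hw, mk_cons, mul_smul]
    · refine (hle w).trans_lt ?_
      change cost w < wf.min (Sx x) (hne x)
      rw [← hcw]
      rw [Prod.Lex.toLex_lt_toLex']
      refine ⟨?_, ?_⟩
      · exact ((List.sublist_cons_self l w).filter _).length_le
      · intro _; simp
    · rintro ⟨q, hq, hqx⟩
      by_contra hl
      have : ∃ w', FreeGroup.mk w' = q ∧ ∀ l ∈ w', l.1 ∈ s := by
        clear hqx
        induction hq using Subgroup.closure_induction with
        | mem x hx =>
          obtain ⟨i, hi, rfl⟩ := hx
          exact ⟨[(i, true)], rfl, by simpa using hi⟩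
        | one => exact ⟨[], FreeGroup.one_eq_mk.symm, by simp⟩
        | mul x y hx hy h1 h2 =>
          obtain ⟨w1, rfl, h1⟩ := h1
          obtain ⟨w2, rfl, h2⟩ := h2
          refine ⟨w1 ++ w2, by rw [FreeGroup.mul_mk], ?_⟩
          intro l hl
          rcases List.mem_append.1 hl with h | h
          · exact h1 l h
          · exact h2 l h
        | inv x hx h1 =>
          obtain ⟨w1, rfl, h1⟩ := h1
          refine ⟨FreeGroup.invRev w1, by rw [FreeGroup.inv_mk], ?_⟩
          intro l hl
          simp only [FreeGroup.invRev, List.mem_reverse, List.mem_map] at hl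
          obtain ⟨l', h2, rfl⟩ := hl
          exact h1 l' h2
      obtain ⟨w', rfl, hw'⟩ := this
      have h1 := hle w'
      have h2 : FreeGroup.mk w' • x0 = x := by rw [hqx]; simp [x0]
      rw [h2] at h1
      change wf.min (Sx x) (hne x) ≤ _ at h1
      rw [← hcw] at h1
      have h3 : w'.filter (fun l => l.1 ∉ s) = [] := by
        rw [List.filter_eq_nil_iff]
        intro a ha
        simpa using hw' a ha
      rw [Prod.Lex.toLex_le_toLex] at h1
      simp only [h3] at h1
      simp [hl] at h1

end kurosh
end MTProof


namespace MTProof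

section kurosh2

variable {ι : Type}

lemma exists_tree (K : Subgroup (FreeGroup ι)) (s : Set ι) :
    ∃ (c : (FreeGroup ι ⧸ K) → ℕ ×ₗ ℕ) (τ : (FreeGroup ι ⧸ K) → FreeGroup ι),
      τ ((1 : FreeGroup ι) : FreeGroup ι ⧸ K) = 1 ∧
      ∀ x : FreeGroup ι ⧸ K, x ≠ ((1 : FreeGroup ι) : FreeGroup ι ⧸ K) →
      ∃ (l : ι × Bool) (y : FreeGroup ι ⧸ K), x = FreeGroup.mk [l] • y ∧ c y < c x ∧
        τ x = FreeGroup.mk [l] * τ y ∧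
        ((∃ q ∈ Subgroup.closure (FreeGroup.of '' s), x = ((q : FreeGroup ι) : FreeGroup ι ⧸ K)) → l.1 ∈ s) := by
  classical
  obtain ⟨c, hc⟩ := exists_step K s
  choose l y h1 h2 h3 using hc
  have wf : WellFounded (fun x y : FreeGroup ι ⧸ K => c x < c y) :=
    InvImage.wf c (wellFounded_lt)
  let F : ∀ x : FreeGroup ι ⧸ K, (∀ y, c y < c x → FreeGroup ι) → FreeGroup ι := fun x rec =>
    if h : x = ((1 : FreeGroup ι) : FreeGroup ι ⧸ K) then 1 else
      FreeGroup.mk [l x h] * rec (y x h) (h2 x h)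
  let τ := wf.fix F
  have hτ : ∀ x, τ x = F x (fun y _ => τ y) := fun x => wf.fix_eq F x
  refine ⟨c, τ, ?_, fun x hx => ⟨l x hx, y x hx, h1 x hx, h2 x hx, ?_, h3 x hx⟩⟩
  · rw [hτ]; simp [F]
  · rw [hτ]; simp [F, hx]

lemma kurosh_free (K : Subgroup (FreeGroup ι)) (s : Set ι) :
    FF (Subgroup.closure (FreeGroup.of '' s) ⊓ K) K := by
  classical
  obtain ⟨c, τ, hτ1, hτ⟩ := exists_tree K s
  set Q := Subgroup.closure (FreeGroup.of '' s) with hQ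
  set x0 : FreeGroup ι ⧸ K := ((1 : FreeGroup ι) : FreeGroup ι ⧸ K) with hx0
  have wf : WellFounded (fun x y : FreeGroup ι ⧸ K => c x < c y) :=
    InvImage.wf c (wellFounded_lt)
  let Y : Set (FreeGroup ι ⧸ K) := {x | ∃ q ∈ Q, x = ((q : FreeGroup ι) : FreeGroup ι ⧸ K)}
  have hsm : ∀ g h : FreeGroup ι, g • ((h : FreeGroup ι) : FreeGroup ι ⧸ K) = ((g * h : FreeGroup ι) : FreeGroup ι ⧸ K) :=
    fun g h => rfl
  have hx0Y : x0 ∈ Y := ⟨1, Q.one_mem, rfl⟩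
  have hYQ : ∀ x ∈ Y, ∀ g ∈ Q, g • x ∈ Y := by
    rintro _ ⟨q, hq, rfl⟩ g hg
    exact ⟨g * q, Q.mul_mem hg hq, rfl⟩
  have hl : ∀ l : ι × Bool, FreeGroup.mk [l] = FreeGroup.of l.1 ∨ FreeGroup.mk [l] = (FreeGroup.of l.1)⁻¹ := by
    rintro ⟨i, b⟩
    cases b
    · right; rfl
    · left; rfl
  have hofQ : ∀ i ∈ s, FreeGroup.of i ∈ Q := fun i hi => Subgroup.subset_closure ⟨i, hi, rfl⟩
  have hlQ : ∀ l : ι × Bool, l.1 ∈ s → FreeGroup.mk [l] ∈ Q := by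
    intro l hls
    rcases hl l with h | h <;> rw [h]
    · exact hofQ _ hls
    · exact Q.inv_mem (hofQ _ hls)
  have hτx : ∀ x, τ x • x0 = x := by
    intro x
    induction x using wf.induction with
    | _ x ih =>
      by_cases hx : x = x0
      · rw [hx, hτ1, one_smul]
      · obtain ⟨l, y, h1, h2, h3, -⟩ := hτ x hx
        rw [h3, mul_smul, ih y h2, ← h1]
  have hτY : ∀ x ∈ Y, τ x ∈ Q := by
    intro x
    induction x using wf.induction with
    | _ x ih =>
      intro hxY
      by_cases hx : x = x0
      · rw [hx, hτ1]; exact Q.one_mem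
      · obtain ⟨l, y, h1, h2, h3, h4⟩ := hτ x hx
        have h5 := hlQ l (h4 hxY)
        rw [h3]
        refine Q.mul_mem h5 (ih y h2 ?_)
        have : y = (FreeGroup.mk [l])⁻¹ • x := by rw [h1, inv_smul_smul]
        rw [this]
        exact hYQ x hxY _ (Q.inv_mem h5)
  let κ : (FreeGroup ι ⧸ K) → ι → FreeGroup ι := fun x i =>
    (τ (FreeGroup.of i • x))⁻¹ * FreeGroup.of i * τ x
  have hmemK : ∀ g : FreeGroup ι, g • x0 = x0 → g ∈ K := by
    intro g hg
    have h1 : ((g * 1 : FreeGroup ι) : FreeGroup ι ⧸ K) = ((1 : FreeGroup ι) : FreeGroup ι ⧸ K) := hg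
    have h2 := QuotientGroup.eq.1 h1
    simpa using h2
  have hKx : ∀ g ∈ K, g • x0 = x0 := by
    intro g hg
    change ((g * 1 : FreeGroup ι) : FreeGroup ι ⧸ K) = ((1 : FreeGroup ι) : FreeGroup ι ⧸ K)
    apply QuotientGroup.eq.2
    simpa using hg
  have hκK : ∀ x i, κ x i ∈ K := by
    intro x i
    apply hmemK
    simp only [κ, mul_smul, hτx]
    rw [inv_smul_eq_iff, hτx]
  have hκQ : ∀ x ∈ Y, ∀ i ∈ s, κ x i ∈ Q := by
    intro x hx i hi
    exact Q.mul_mem (Q.mul_mem (Q.inv_mem (hτY _ (hYQ x hx _ (hofQ i hi)))) (hofQ i hi)) (hτY x hx)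
  -- generation
  have gen1 : ∀ (B : Subgroup (FreeGroup ι)), (∀ x i, κ x i ∈ B) → K ≤ B := by
    intro B hB
    have : ∀ (g : FreeGroup ι) x, (τ (g • x))⁻¹ * g * τ x ∈ B := by
      intro g
      induction g using FreeGroup.induction_on with
      | C1 => intro x; simp
      | of a => intro x; exact hB x a
      | inv_of a ih =>
        intro x
        have := B.inv_mem (ih ((FreeGroup.of a)⁻¹ • x))
        rw [smul_inv_smul] at this
        convert this using 1
        group
      | mul g h h1 h2 =>
        intro x
        have := B.mul_mem (h1 (h • x)) (h2 x)
        rw [mul_smul]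
        convert this using 1
        group
    intro k hk
    have := this k x0
    rw [hKx k hk, hτ1] at this
    simpa using this
  have gen2 : ∀ (B : Subgroup (FreeGroup ι)), (∀ x ∈ Y, ∀ i ∈ s, κ x i ∈ B) → Q ⊓ K ≤ B := by
    intro B hB
    have : ∀ g ∈ Q, ∀ x ∈ Y, (τ (g • x))⁻¹ * g * τ x ∈ B := by
      intro g hg
      induction hg using Subgroup.closure_induction with
      | one => intro x hx; simp
      | mem g hg => obtain ⟨i, hi, rfl⟩ := hg; intro x hx; exact hB x hx i hi
      | inv g hg ih =>
        intro x hx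
        have := B.inv_mem (ih (g⁻¹ • x) (hYQ _ hx _ (Q.inv_mem hg)))
        rw [smul_inv_smul] at this
        convert this using 1
        group
      | mul g h hg hh h1 h2 =>
        intro x hx
        have := B.mul_mem (h1 (h • x) (hYQ _ hx _ hh)) (h2 x hx)
        rw [mul_smul]
        convert this using 1
        group
    rintro k ⟨hkQ, hk⟩
    have := this k hkQ x0 hx0Y
    rw [hKx k hk, hτ1] at this
    simpa using this
  let S1 : Set (FreeGroup ι) := {g | ∃ x i, x ∈ Y ∧ i ∈ s ∧ g = κ x i}
  let S2 : Set (FreeGroup ι) := {g | ∃ x i, ¬ (x ∈ Y ∧ i ∈ s) ∧ g = κ x i}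
  have hD : Q ⊓ K = Subgroup.closure S1 := by
    apply le_antisymm
    · apply gen2
      intro x hx i hi
      exact Subgroup.subset_closure ⟨x, i, hx, hi, rfl⟩
    · rw [Subgroup.closure_le]
      rintro _ ⟨x, i, hx, hi, rfl⟩
      exact ⟨hκQ x hx i hi, hκK x i⟩
  refine ⟨Subgroup.closure S2, le_antisymm (sup_le inf_le_right ?_) ?_, ?_⟩
  · rw [Subgroup.closure_le]
    rintro _ ⟨x, i, -, rfl⟩
    exact hκK x i
  · apply gen1
    intro x i
    by_cases hxi : x ∈ Y ∧ i ∈ s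
    · exact Subgroup.mem_sup_left ⟨hκQ x hxi.1 i hxi.2, hκK x i⟩
    · exact Subgroup.mem_sup_right (Subgroup.subset_closure ⟨x, i, hxi, rfl⟩)
  intro T _ p q hp hq
  let γ : (FreeGroup ι ⧸ K) → ι → T := fun x i => if x ∈ Y ∧ i ∈ s then p (κ x i) else q (κ x i)
  have hγ1 : ∀ x i, κ x i = 1 → γ x i = 1 := by
    intro x i h
    simp only [γ, h, hp.one, hq.one, ite_self]
  let E : ι → Equiv.Perm (T × (FreeGroup ι ⧸ K)) := fun i =>
    { toFun := fun u => (γ u.2 i * u.1, FreeGroup.of i • u.2)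
      invFun := fun u => ((γ ((FreeGroup.of i)⁻¹ • u.2) i)⁻¹ * u.1, (FreeGroup.of i)⁻¹ • u.2)
      left_inv := fun u => by ext <;> simp
      right_inv := fun u => by ext <;> simp }
  let ψ := FreeGroup.lift E
  have hα : ∀ w : FreeGroup ι, ∃ a : (FreeGroup ι ⧸ K) → T, ∀ g x, ψ w (g, x) = (a x * g, w • x) := by
    intro w
    induction w using FreeGroup.induction_on with
    | C1 => exact ⟨fun _ => 1, fun g x => by simp⟩
    | of i =>
      refine ⟨fun x => γ x i, fun g x => ?_⟩
      simp only [ψ, FreeGroup.lift_apply_of]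
      rfl
    | inv_of i _ =>
      refine ⟨fun x => (γ ((FreeGroup.of i)⁻¹ • x) i)⁻¹, fun g x => ?_⟩
      simp only [ψ, map_inv, FreeGroup.lift_apply_of]
      rfl
    | mul v w hv hw =>
      obtain ⟨a, ha⟩ := hv
      obtain ⟨b, hb⟩ := hw
      refine ⟨fun x => a (w • x) * b x, fun g x => ?_⟩
      rw [map_mul, Equiv.Perm.mul_apply, hb, ha, mul_smul, mul_assoc]
  choose α hα using hα
  have hmul : ∀ v w x, α (v * w) x = α v (w • x) * α w x := by
    intro v w x
    have h1 := hα (v * w) 1 x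
    rw [map_mul, Equiv.Perm.mul_apply, hα, hα] at h1
    have := congrArg Prod.fst h1
    simpa using this.symm
  have hof : ∀ i x, α (FreeGroup.of i) x = γ x i := by
    intro i x
    have h1 := hα (FreeGroup.of i) 1 x
    simp only [ψ, FreeGroup.lift_apply_of] at h1
    have := congrArg Prod.fst h1
    simpa [E] using this.symm
  have hone : ∀ x, α 1 x = 1 := by
    intro x
    have := hmul 1 1 x
    simpa using this
  have hατ : ∀ x, α (τ x) x0 = 1 := by
    intro x
    induction x using wf.induction with
    | _ x ih =>
      by_cases hx : x = x0
      · rw [hx, hτ1, hone]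
      · obtain ⟨l, y, h1, h2, h3, h4⟩ := hτ x hx
        rw [h3, hmul, ih y h2, hτx, mul_one]
        rcases hl l with h | h
        · rw [h, hof]
          apply hγ1
          simp only [κ]
          rw [h] at h1 h3
          rw [← h1, h3]; group
        · rw [h] at h1 h3 ⊢
          have h5 : FreeGroup.of l.1 • x = y := by rw [h1, smul_inv_smul]
          have h6 := hmul (FreeGroup.of l.1)⁻¹ (FreeGroup.of l.1) x
          rw [inv_mul_cancel, hone, h5, hof, hγ1, mul_one] at h6
          · exact h6.symm
          · simp only [κ]
            rw [h5, h3]; group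
  have hκ : ∀ x i, α (κ x i) x0 = γ x i := by
    intro x i
    have h1 : FreeGroup.of i * τ x = τ (FreeGroup.of i • x) * κ x i := by
      simp only [κ]; group
    have h2 := congrArg (fun g => α g x0) h1
    simp only [hmul, hατ, hτx, hof, hKx _ (hκK x i), one_mul, mul_one] at h2
    exact h2.symm
  have hhom : HomOn K (fun k => α k x0) := by
    intro x hx y hy
    simp only [hmul, hKx y hy]
  refine ⟨fun k => α k x0, hhom, ?_, ?_⟩
  · rw [hD]
    rw [hD] at hp
    apply HomOn.eqOn (hhom.mono (by rw [← hD]; exact inf_le_right)) hp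
    rintro _ ⟨x, i, hx, hi, rfl⟩
    simp only [hκ, γ, hx, hi, and_self, if_true]
  · apply HomOn.eqOn (hhom.mono _) hq
    · rintro _ ⟨x, i, hxi, rfl⟩
      simp only [hκ, γ, if_neg hxi]
    · rw [Subgroup.closure_le]
      rintro _ ⟨x, i, -, rfl⟩
      exact hκK x i

lemma kurosh {G : Type} [Group G] {f : ι → G} (hf : FreeOn f) (s : Set ι) (K : Subgroup G)
    (hK : K ≤ Subgroup.closure (Set.range f)) : FF (Subgroup.closure (f '' s) ⊓ K) K := by
  have h := (kurosh_free (K.comap (FreeGroup.lift f)) s).map (FreeGroup.lift f) hf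
  rw [← FreeGroup.range_lift_eq_closure] at hK
  rw [Subgroup.map_inf _ _ _ hf, Subgroup.map_comap_eq, inf_eq_right.2 hK,
    MonoidHom.map_closure, ← Set.image_comp] at h
  have h2 : (⇑(FreeGroup.lift f) ∘ FreeGroup.of) = f := by
    funext x; simp
  rw [h2] at h
  exact h

end kurosh2
end MTProof


namespace MTProof

section gens

variable {G : Type} [Group G]

/-- `K` is generated by `n` elements. -/
def GenBy (n : ℕ) (K : Subgroup G) : Prop := ∃ v : Fin n → G, Subgroup.closure (Set.range v) = K

/-- the minimal number of generators -/
noncomputable def gens (K : Subgroup G) : ℕ := sInf {n | GenBy n K}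

lemma gens_le {K : Subgroup G} {n : ℕ} (h : GenBy n K) : gens K ≤ n := Nat.sInf_le h

lemma GenBy.fg {K : Subgroup G} {n : ℕ} (h : GenBy n K) : K.FG := by
  obtain ⟨v, rfl⟩ := h
  exact Subgroup.fg_iff _ |>.2 ⟨_, rfl, Set.finite_range v⟩

lemma genBy_of_finite {α : Type} [Finite α] (v : α → G) :
    GenBy (Nat.card α) (Subgroup.closure (Set.range v)) := by
  refine ⟨v ∘ (Finite.equivFin α).symm, ?_⟩
  rw [EquivLike.range_comp]

lemma exists_genBy {K : Subgroup G} (h : K.FG) : ∃ n, GenBy n K := by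
  obtain ⟨S, hS⟩ := h
  have := genBy_of_finite (fun x : (S : Set G) => (x : G))
  rw [Subtype.range_coe, hS] at this
  exact ⟨_, this⟩

lemma gens_spec {K : Subgroup G} (h : K.FG) : GenBy (gens K) K :=
  Nat.sInf_mem (exists_genBy h)

lemma FF.fg {D G0 : Subgroup G} (h : FF D G0) (hG : G0.FG) : D.FG := by
  obtain ⟨n, v, hv⟩ := exists_genBy hG
  obtain ⟨v', hv'⟩ := h.gen v hv
  exact GenBy.fg ⟨v', hv'⟩

lemma mem_closure_finset {α : Type} (f : α → G) {x : G}
    (hx : x ∈ Subgroup.closure (Set.range f)) :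
    ∃ s : Set α, s.Finite ∧ x ∈ Subgroup.closure (f '' s) := by
  induction hx using Subgroup.closure_induction with
  | mem x hx =>
    obtain ⟨a, rfl⟩ := hx
    exact ⟨{a}, Set.finite_singleton a, Subgroup.subset_closure ⟨a, rfl, rfl⟩⟩
  | one => exact ⟨∅, Set.finite_empty, Subgroup.one_mem _⟩
  | mul x y _ _ h1 h2 =>
    obtain ⟨s, hs, h1⟩ := h1
    obtain ⟨t, ht, h2⟩ := h2
    exact ⟨s ∪ t, hs.union ht, Subgroup.mul_mem _
      (Subgroup.closure_mono (Set.image_mono Set.subset_union_left) h1)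
      (Subgroup.closure_mono (Set.image_mono Set.subset_union_right) h2)⟩
  | inv x _ h1 =>
    obtain ⟨s, hs, h1⟩ := h1
    exact ⟨s, hs, Subgroup.inv_mem _ h1⟩

lemma fg_le_closure_finset {α : Type} (f : α → G) {R : Subgroup G} (hR : R.FG)
    (hx : R ≤ Subgroup.closure (Set.range f)) :
    ∃ s : Set α, s.Finite ∧ R ≤ Subgroup.closure (f '' s) := by
  obtain ⟨n, v, rfl⟩ := exists_genBy hR
  have : ∀ i, ∃ s : Set α, s.Finite ∧ v i ∈ Subgroup.closure (f '' s) := fun i =>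
    mem_closure_finset f (hx (Subgroup.subset_closure ⟨i, rfl⟩))
  choose s h1 h2 using this
  refine ⟨⋃ i, s i, Set.finite_iUnion h1, ?_⟩
  rw [Subgroup.closure_le]
  rintro _ ⟨i, rfl⟩
  exact Subgroup.closure_mono (Set.image_mono (Set.subset_iUnion s i)) (h2 i)

lemma fg_le_seq {R : ℕ → Subgroup G} (hR : Monotone R) {Q : Subgroup G} (hQ : Q.FG)
    (h : Q ≤ ⨆ i, R i) : ∃ j, Q ≤ R j := by
  obtain ⟨n, v, rfl⟩ := exists_genBy hQ
  have : ∀ i, ∃ j, v i ∈ R j := by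
    intro i
    have h1 := h (Subgroup.subset_closure ⟨i, rfl⟩)
    rwa [Subgroup.mem_iSup_of_directed hR.directed_le] at h1
  choose j hj using this
  refine ⟨Finset.univ.sup j, ?_⟩
  rw [Subgroup.closure_le]
  rintro _ ⟨i, rfl⟩
  exact hR (Finset.le_sup (Finset.mem_univ i)) (hj i)

end gens

section freegens

variable {I : Type}

lemma exists_finite_basis {K : Subgroup (FreeGroup I)} (hK : K.FG) :
    ∃ f : Fin (gens K) → FreeGroup I, FreeOn f ∧ Subgroup.closure (Set.range f) = K := by
  obtain ⟨α, f, hf, hfK⟩ := exists_freeOn K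
  obtain ⟨v, hv⟩ := gens_spec hK
  obtain ⟨h1, h2⟩ := freeOn_card_le hf v (by rw [hv, hfK])
  have h3 := gens_le (genBy_of_finite f)
  rw [hfK] at h3
  have h4 : Nat.card α = gens K := le_antisymm h2 h3
  let e : Fin (gens K) ≃ α := (Fin.castOrderIso h4.symm).toEquiv.trans (Finite.equivFin α).symm
  refine ⟨f ∘ e, ?_, by rw [EquivLike.range_comp, hfK]⟩
  have : FreeGroup.lift (f ∘ e) = (FreeGroup.lift f).comp (FreeGroup.map e) := by ext; simp
  unfold FreeOn
  rw [this]
  have hm : Function.Injective (FreeGroup.map e) := FreeGroup.map_injective e.injective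
  rw [MonoidHom.coe_comp]
  exact Function.Injective.comp hf hm

lemma freeOn_of_min {α : Type} [Finite α] (v : α → FreeGroup I)
    (h : Nat.card α ≤ gens (Subgroup.closure (Set.range v))) : FreeOn v := by
  have h3 := genBy_of_finite v
  obtain ⟨f, hf, hfK⟩ := exists_finite_basis h3.fg
  have h4 : Nat.card α = gens (Subgroup.closure (Set.range v)) := le_antisymm h (gens_le h3)
  let e : α ≃ Fin (gens (Subgroup.closure (Set.range v))) :=
    (Finite.equivFin α).trans (Fin.castOrderIso h4).toEquiv
  have hr : (FreeGroup.lift f).range = (FreeGroup.lift v).range := by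
    rw [FreeGroup.range_lift_eq_closure, hfK, FreeGroup.range_lift_eq_closure]
  have : ∀ a, ∃ z, FreeGroup.lift f z = v a := by
    intro a
    have : v a ∈ (FreeGroup.lift f).range := by
      rw [hr]; exact ⟨FreeGroup.of a, by simp⟩
    exact this
  choose z hz using this
  have h1 : FreeGroup.lift v = (FreeGroup.lift f).comp (FreeGroup.lift z) := by ext; simp [hz]
  have hs : Function.Surjective (FreeGroup.lift z) := by
    intro x
    have : FreeGroup.lift f x ∈ (FreeGroup.lift v).range := by rw [← hr]; exact ⟨x, rfl⟩
    obtain ⟨y, hy⟩ := this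
    rw [h1] at hy
    exact ⟨y, hf hy⟩
  have hs' : Function.Surjective ((FreeGroup.map e.symm).comp (FreeGroup.lift z)) :=
    (FreeGroup.map_surjective e.symm.surjective).comp hs
  have hi := hopf _ hs'
  have hi' : Function.Injective (FreeGroup.lift z) := Function.Injective.of_comp hi
  unfold FreeOn
  rw [h1]
  rw [MonoidHom.coe_comp]
  exact Function.Injective.comp hf hi'

lemma FF.eq_of_gens {D R : Subgroup (FreeGroup I)} (h : FF D R) (hR : R.FG)
    (hg : gens R ≤ gens D) : D = R := by
  have hD := h.fg hR
  obtain ⟨C, h⟩ := h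
  obtain ⟨f, hf, hfD⟩ := exists_finite_basis hD
  obtain ⟨β, g, hg', hgC⟩ := exists_freeOn C
  have h1 := h.freeOn hf hg' hfD hgC
  obtain ⟨v, hv⟩ := gens_spec hR
  obtain ⟨h2, h3⟩ := freeOn_card_le h1 v (by rw [hv, closure_range_sumElim, hfD, hgC, h.1])
  have : Finite β := Finite.sum_right (Fin (gens D))
  rw [Nat.card_sum, Nat.card_fin] at h3
  have h4 : Nat.card β = 0 := by omega
  have : IsEmpty β := (Finite.card_eq_zero_iff).1 h4
  have hC : C = ⊥ := by rw [← hgC, Set.range_eq_empty, Subgroup.closure_empty]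
  rw [← h.1, hC, sup_bot_eq]

variable (Φ : FreeGroup I →* FreeGroup I)

/-- `P ↦ ⟨P, Φ P⟩` -/
def step (P : Subgroup (FreeGroup I)) : Subgroup (FreeGroup I) := P ⊔ P.map Φ

lemma le_step (P : Subgroup (FreeGroup I)) : P ≤ step Φ P := le_sup_left

lemma step_fg {P : Subgroup (FreeGroup I)} (hP : P.FG) : (step Φ P).FG := by
  refine hP.sup ?_
  obtain ⟨n, v, rfl⟩ := exists_genBy hP
  rw [MonoidHom.map_closure, ← Set.range_comp]
  exact GenBy.fg ⟨_, rfl⟩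

/-- chain relation -/
def Der : Subgroup (FreeGroup I) → Subgroup (FreeGroup I) → Prop :=
  Relation.ReflTransGen (fun R R' => R ≤ R' ∧ R' ≤ step Φ R)

lemma exists_next {R : Subgroup (FreeGroup I)} (hR : R.FG) :
    ∃ R' : Subgroup (FreeGroup I), R ≤ R' ∧ FF R' (step Φ R) ∧ R'.FG ∧
      ∀ R'', R ≤ R'' → FF R'' (step Φ R) → gens R' ≤ gens R'' := by
  classical
  let S : Set ℕ := {n | ∃ R', R ≤ R' ∧ FF R' (step Φ R) ∧ gens R' = n}
  have hS : S.Nonempty := ⟨_, step Φ R, le_step Φ R, FF.refl _, rfl⟩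
  obtain ⟨R', h1, h2, h3⟩ := Nat.sInf_mem hS
  refine ⟨R', h1, h2, h2.fg (step_fg Φ hR), fun R'' h4 h5 => ?_⟩
  rw [h3]
  exact Nat.sInf_le ⟨R'', h4, h5, rfl⟩

lemma exists_tight {R : Subgroup (FreeGroup I)} (hR : R.FG) :
    ∃ P : Subgroup (FreeGroup I), P.FG ∧ R ≤ P ∧ Der Φ R P ∧ FF P (step Φ P) := by
  have hnext : ∀ R : {R : Subgroup (FreeGroup I) // R.FG}, ∃ R' : {R : Subgroup (FreeGroup I) // R.FG},
      R.1 ≤ R'.1 ∧ FF R'.1 (step Φ R.1) ∧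
      ∀ R'', R.1 ≤ R'' → FF R'' (step Φ R.1) → gens R'.1 ≤ gens R'' := by
    rintro ⟨R, hR⟩
    obtain ⟨R', h1, h2, h3, h4⟩ := exists_next Φ hR
    exact ⟨⟨R', h3⟩, h1, h2, h4⟩
  choose next h1 h2 h3 using hnext
  let q : ℕ → {R : Subgroup (FreeGroup I) // R.FG} := fun i => next^[i] ⟨R, hR⟩
  have hq : ∀ i, q (i + 1) = next (q i) := fun i => Function.iterate_succ_apply' _ _ _
  let u : ℕ → Subgroup (FreeGroup I) := fun i => (q i).1
  have hu0 : u 0 = R := rfl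
  have hfg : ∀ i, (u i).FG := fun i => (q i).2
  have hmono : Monotone u := by
    apply monotone_nat_of_le_succ
    intro i
    simp only [u, hq]
    exact h1 _
  have hff : ∀ i, FF (u (i + 1)) (step Φ (u i)) := by
    intro i; simp only [u, hq]; exact h2 _
  have hmin : ∀ i, ∀ R'', u i ≤ R'' → FF R'' (step Φ (u i)) → gens (u (i + 1)) ≤ gens R'' := by
    intro i; simp only [u, hq]; exact h3 _
  have hder : ∀ i, Der Φ R (u i) := by
    intro i
    induction i with
    | zero => exact Relation.ReflTransGen.refl
    | succ i ih => exact ih.tail ⟨hmono (Nat.le_succ i), (hff i).le⟩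
  obtain ⟨α, f, hf, hfU⟩ := exists_freeOn (⨆ i, u i)
  obtain ⟨s, hs, hRs⟩ := fg_le_closure_finset f hR (by rw [hfU]; exact le_iSup u 0)
  have hQ : ∀ i, u i ≤ Subgroup.closure (f '' s) := by
    intro i
    induction i with
    | zero => exact hRs
    | succ i ih =>
      have h4 := kurosh hf s (u (i + 1)) (by rw [hfU]; exact le_iSup u (i + 1))
      have h5 := h4.trans (hff i)
      have h6 := hmin i _ (le_inf ih (hmono (Nat.le_succ i))) h5
      have h7 := h4.eq_of_gens (hfg _) h6
      exact inf_eq_right.1 h7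
  obtain ⟨j, hj⟩ := fg_le_seq (Q := Subgroup.closure (f '' s)) hmono
    (Subgroup.fg_iff _ |>.2 ⟨_, rfl, hs.image f⟩)
    (by rw [← hfU]; exact Subgroup.closure_mono (Set.image_subset_range f s))
  have hjj : u (j + 1) = u j := le_antisymm ((hQ (j + 1)).trans hj) (hmono (Nat.le_succ j))
  refine ⟨u j, hfg j, hmono (Nat.zero_le j), hder j, ?_⟩
  have := hff j
  rwa [hjj] at this

end freegens
end MTProof


namespace MTProof

section linalg

variable {V : Type} [AddCommGroup V] [Module ℚ V]

/-- span of the first `c` translates -/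
def tspan (τ : V →ₗ[ℚ] V) {r : ℕ} (β : Fin r → V) (c : ℕ) : Submodule ℚ V :=
  Submodule.span ℚ (Set.range fun x : Fin r × Fin c => (τ ^ (x.2 : ℕ)) (β x.1))

instance tspan_fin (τ : V →ₗ[ℚ] V) {r : ℕ} (β : Fin r → V) (c : ℕ) :
    Module.Finite ℚ (tspan τ β c) :=
  Module.Finite.span_of_finite ℚ (Set.finite_range _)

lemma tspan_mem (τ : V →ₗ[ℚ] V) {r : ℕ} (β : Fin r → V) {c i : ℕ} (hi : i < c) (k : Fin r) :
    (τ ^ i) (β k) ∈ tspan τ β c :=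
  Submodule.subset_span ⟨(k, ⟨i, hi⟩), rfl⟩

lemma tspan_le (τ : V →ₗ[ℚ] V) {r : ℕ} (β : Fin r → V) {c : ℕ} {N : Submodule ℚ V}
    (h : ∀ i < c, ∀ k, (τ ^ i) (β k) ∈ N) : tspan τ β c ≤ N := by
  unfold tspan
  rw [Submodule.span_le]
  rintro _ ⟨⟨k, i⟩, rfl⟩
  exact h i i.2 k

lemma tspan_mono (τ : V →ₗ[ℚ] V) {r : ℕ} (β : Fin r → V) : Monotone (tspan τ β) := by
  intro c c' h
  exact tspan_le τ β fun i hi k => tspan_mem τ β (hi.trans_le h) k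

lemma tspan_rank (τ : V →ₗ[ℚ] V) {r : ℕ} (β : Fin r → V) (c : ℕ) :
    Module.finrank ℚ (tspan τ β c) ≤ r * c := by
  have := finrank_range_le_card (R := ℚ) (fun x : Fin r × Fin c => (τ ^ (x.2 : ℕ)) (β x.1))
  simp only [Set.finrank, Fintype.card_prod, Fintype.card_fin] at this
  exact this

lemma tspan_map (τ : V →ₗ[ℚ] V) {r : ℕ} (β : Fin r → V) (c : ℕ) :
    (tspan τ β c).map τ ≤ tspan τ β (c + 1) := by
  rw [Submodule.map_le_iff_le_comap]
  apply tspan_le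
  intro i hi k
  have := tspan_mem τ β (Nat.succ_lt_succ hi) k
  rw [Submodule.mem_comap]
  rwa [Nat.succ_eq_add_one, pow_succ', Module.End.mul_apply] at this

lemma tspan_add (τ : V →ₗ[ℚ] V) {r : ℕ} (β : Fin r → V) (c n : ℕ) :
    Module.finrank ℚ (tspan τ β (c + n)) ≤
      Module.finrank ℚ (tspan τ β c) + Module.finrank ℚ (tspan τ β n) := by
  have h1 : tspan τ β (c + n) ≤ tspan τ β c ⊔ (tspan τ β n).map (τ ^ c) := by
    apply tspan_le
    intro i hi k
    by_cases h : i < c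
    · exact Submodule.mem_sup_left (tspan_mem τ β h k)
    · apply Submodule.mem_sup_right
      obtain ⟨j, rfl⟩ := Nat.exists_eq_add_of_le (not_lt.1 h)
      rw [pow_add, Module.End.mul_apply]
      exact Submodule.mem_map_of_mem (tspan_mem τ β (by omega) k)
  calc _ ≤ Module.finrank ℚ ↥(tspan τ β c ⊔ (tspan τ β n).map (τ ^ c)) :=
        Submodule.finrank_mono h1
    _ ≤ _ := Submodule.finrank_add_le_finrank_add_finrank _ _
    _ ≤ _ := by
      gcongr
      exact Submodule.finrank_map_le _ _

lemma tspan_mul (τ : V →ₗ[ℚ] V) {r : ℕ} (β : Fin r → V) (j n : ℕ) :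
    Module.finrank ℚ (tspan τ β (j * n)) ≤ j * Module.finrank ℚ (tspan τ β n) := by
  induction j with
  | zero =>
    have := tspan_rank τ β 0
    simpa using this
  | succ j ih =>
    rw [Nat.succ_mul, Nat.succ_mul]
    exact (tspan_add τ β _ _).trans (by gcongr)

lemma linalg_key (τ : V →ₗ[ℚ] V) {p r r' : ℕ} (β : Fin r → V) (ω : Fin p → V)
    (hω : ∀ j, τ (ω j) ∈ Submodule.span ℚ (Set.range ω) ⊔ tspan τ β 1)
    (e : Fin r' × ℕ → V) (he : LinearIndependent ℚ e)
    (hτ : ∀ k i, e (k, i + 1) = τ (e (k, i)))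
    (h0 : ∀ k, e (k, 0) ∈ ⨆ c, (Submodule.span ℚ (Set.range ω) ⊔ tspan τ β c)) :
    r' ≤ r ∧ (r' = r → ∀ n, r * n ≤ Module.finrank ℚ (tspan τ β n)) := by
  set W := Submodule.span ℚ (Set.range ω) with hW
  have hWf : Module.Finite ℚ W := Module.Finite.span_of_finite ℚ (Set.finite_range _)
  have hWr : Module.finrank ℚ W ≤ p := by
    have := finrank_range_le_card (R := ℚ) ω
    simpa [Set.finrank] using this
  let A : ℕ → Submodule ℚ V := fun c => W ⊔ tspan τ β c
  have hA : Monotone A := fun c c' h => sup_le_sup_left (tspan_mono τ β h) W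
  have hτA : ∀ c, ∀ v ∈ A c, τ v ∈ A (c + 1) := by
    intro c
    have : A c ≤ (A (c + 1)).comap τ := by
      refine sup_le ?_ ?_
      · rw [hW, Submodule.span_le]
        rintro _ ⟨j, rfl⟩
        exact hA (by omega : 1 ≤ c + 1) (hω j)
      · rw [← Submodule.map_le_iff_le_comap]
        exact (tspan_map τ β c).trans le_sup_right
    exact this
  obtain ⟨c0, hc0⟩ : ∃ c0, ∀ k, e (k, 0) ∈ A c0 := by
    have : ∀ k, ∃ c, e (k, 0) ∈ A c := by
      intro k
      have := h0 k
      rwa [Submodule.mem_iSup_of_directed _ hA.directed_le] at this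
    choose c hc using this
    exact ⟨Finset.univ.sup c, fun k => hA (Finset.le_sup (Finset.mem_univ k)) (hc k)⟩
  have hei : ∀ k i, e (k, i) ∈ A (c0 + i) := by
    intro k i
    induction i with
    | zero => exact hc0 k
    | succ i ih => rw [hτ]; exact hτA _ _ ih
  have main : ∀ m, r' * m ≤ p + Module.finrank ℚ (tspan τ β (c0 + m)) := by
    intro m
    let e' : Fin r' × Fin m → V := fun x => e (x.1, x.2)
    have hli : LinearIndependent ℚ e' := by
      apply he.comp (fun x : Fin r' × Fin m => (x.1, (x.2 : ℕ)))
      rintro ⟨a, b⟩ ⟨a', b'⟩ h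
      simp only [Prod.mk.injEq] at h
      exact Prod.ext h.1 (Fin.ext h.2)
    have h1 : Submodule.span ℚ (Set.range e') ≤ A (c0 + m) := by
      rw [Submodule.span_le]
      rintro _ ⟨⟨k, i⟩, rfl⟩
      exact hA (by omega) (hei k i)
    have h2 := finrank_span_eq_card hli
    have h3 : Module.finrank ℚ (Submodule.span ℚ (Set.range e')) ≤ Module.finrank ℚ (A (c0 + m)) :=
      Submodule.finrank_mono h1
    rw [h2] at h3
    have h4 : Module.finrank ℚ (A (c0 + m)) ≤ _ :=
      Submodule.finrank_add_le_finrank_add_finrank W (tspan τ β (c0 + m))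
    simp only [Fintype.card_prod, Fintype.card_fin] at h3
    omega
  refine ⟨?_, ?_⟩
  · by_contra h
    have h1 := main (p + r * c0 + 1)
    have h2 := tspan_rank τ β (c0 + (p + r * c0 + 1))
    have h3 : (r + 1) * (p + r * c0 + 1) ≤ r' * (p + r * c0 + 1) :=
      Nat.mul_le_mul_right _ (by omega)
    nlinarith
  · rintro rfl n
    by_contra h
    have hn : 1 ≤ n := by
      rcases Nat.eq_zero_or_pos n with rfl | h'
      · simp at h
      · exact h'
    obtain ⟨d, hd⟩ : ∃ d, Module.finrank ℚ (tspan τ β n) = d := ⟨_, rfl⟩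
    rw [hd] at h
    set j := p + r' * c0 + 1 + c0 with hj
    have h1 : c0 ≤ j * n := by nlinarith
    obtain ⟨m, hm⟩ := Nat.exists_eq_add_of_le h1
    have h2 := main m
    rw [← hm] at h2
    have h3 := tspan_mul τ β j n
    rw [hd] at h3
    have h4 : j * (d + 1) ≤ j * (r' * n) := Nat.mul_le_mul_left _ (by omega)
    have h5 : r' * (j * n) = r' * c0 + r' * m := by rw [hm]; ring
    have h6 : j * (r' * n) = r' * (j * n) := by ring
    have h7 : j * (d + 1) = j * d + j := by ring
    omega

end linalg

section der

variable {I : Type} (Φ : FreeGroup I →* FreeGroup I)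

lemma step_mono {P Q : Subgroup (FreeGroup I)} (h : P ≤ Q) : step Φ P ≤ step Φ Q :=
  sup_le_sup h (Subgroup.map_mono h)

lemma map_mem_step {P : Subgroup (FreeGroup I)} {x : FreeGroup I} (hx : x ∈ P) :
    Φ x ∈ step Φ P := Subgroup.mem_sup_right (Subgroup.mem_map_of_mem Φ hx)

lemma Der.le {P Q : Subgroup (FreeGroup I)} (h : Der Φ P Q) : P ≤ Q := by
  induction h with
  | refl => exact le_rfl
  | tail _ h ih => exact ih.trans h.1

lemma der_iter (P : Subgroup (FreeGroup I)) (n : ℕ) : Der Φ P ((step Φ)^[n] P) := by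
  induction n with
  | zero => exact Relation.ReflTransGen.refl
  | succ n ih =>
    rw [Function.iterate_succ_apply']
    exact ih.tail ⟨le_step Φ _, le_rfl⟩

/-- tight subgroup data -/
def Tight (P : Subgroup (FreeGroup I)) (r : ℕ) : Prop :=
  ∃ (p : ℕ) (a : Fin p → FreeGroup I) (b : Fin r → FreeGroup I), FreeOn (Sum.elim a b) ∧
    Subgroup.closure (Set.range a) = P ∧ P ⊔ Subgroup.closure (Set.range b) = step Φ P

lemma tight_of_FF {P : Subgroup (FreeGroup I)} (hP : P.FG) (h : FF P (step Φ P)) :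
    ∃ r, Tight Φ P r := by
  obtain ⟨C, h⟩ := h
  have hC : C.FG := FF.fg ⟨P, h.symm⟩ (step_fg Φ hP)
  obtain ⟨a, ha, haP⟩ := exists_finite_basis hP
  obtain ⟨b, hb, hbC⟩ := exists_finite_basis hC
  exact ⟨_, _, a, b, h.freeOn ha hb haP hbC, haP, by rw [hbC, h.1]⟩

lemma der_key {P P' : Subgroup (FreeGroup I)} {r r' : ℕ} {b : Fin r → FreeGroup I}
    (hP : P.FG) (hb : P ⊔ Subgroup.closure (Set.range b) = step Φ P)
    (hder : Der Φ P P') (ht : Tight Φ P' r') :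
    r' ≤ r ∧ (r' = r → ∀ n, (step Φ)^[n] P ≤ P' → r * n ≤ gens ((step Φ)^[n] P)) := by
  obtain ⟨p', a', b', hfree, haP', hbP'⟩ := ht
  obtain ⟨p, a, haP⟩ := exists_genBy hP
  obtain ⟨θ, hθ, hθv⟩ := hfree.extend (T := Multiplicative ((Fin p' ⊕ Fin r' × ℕ) →₀ ℚ))
    (Sum.elim (fun j => Multiplicative.ofAdd (Finsupp.single (Sum.inl j) 1))
      (fun k => Multiplicative.ofAdd (Finsupp.single (Sum.inr (k, 0)) 1)))
  rw [closure_range_sumElim, haP', hbP'] at hθ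
  have hθa : ∀ j, θ (a' j) = Multiplicative.ofAdd (Finsupp.single (Sum.inl j) 1) :=
    fun j => hθv (Sum.inl j)
  have hθb : ∀ k, θ (b' k) = Multiplicative.ofAdd (Finsupp.single (Sum.inr (k, 0)) 1) :=
    fun k => hθv (Sum.inr k)
  let τ : ((Fin p' ⊕ Fin r' × ℕ) →₀ ℚ) →ₗ[ℚ] ((Fin p' ⊕ Fin r' × ℕ) →₀ ℚ) :=
    Finsupp.linearCombination ℚ (Sum.elim (fun j => (θ (Φ (a' j))).toAdd)
      (fun x => Finsupp.single (Sum.inr (x.1, x.2 + 1)) 1))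
  have hτθ : ∀ x ∈ P', (θ (Φ x)).toAdd = τ (θ x).toAdd := by
    intro x hx
    have h1 : HomOn (Subgroup.closure (Set.range a')) (fun x => θ (Φ x)) := by
      rw [haP']
      intro x hx y hy
      simp only [map_mul]
      exact hθ _ (map_mem_step Φ hx) _ (map_mem_step Φ hy)
    have h2 : HomOn (Subgroup.closure (Set.range a'))
        (fun x => Multiplicative.ofAdd (τ (θ x).toAdd)) := by
      rw [haP']
      intro x hx y hy
      simp only [hθ _ (le_step Φ _ hx) _ (le_step Φ _ hy), toAdd_mul, map_add, ofAdd_add]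
    have h3 := h1.eqOn h2 (by
      rintro _ ⟨j, rfl⟩
      simp only [hθa, toAdd_ofAdd]
      simp [τ]) x (by rw [haP']; exact hx)
    rw [h3]; rfl
  let β : Fin r → ((Fin p' ⊕ Fin r' × ℕ) →₀ ℚ) := fun k => (θ (b k)).toAdd
  let ω : Fin p → ((Fin p' ⊕ Fin r' × ℕ) →₀ ℚ) := fun j => (θ (a j)).toAdd
  have hPP' : P ≤ P' := hder.le
  have hstep1 : ∀ x ∈ step Φ P, (θ x).toAdd ∈ Submodule.span ℚ (Set.range ω) ⊔ tspan τ β 1 := by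
    have h1 : step Φ P = Subgroup.closure (Set.range (Sum.elim a b)) := by
      rw [closure_range_sumElim, haP, hb]
    rw [h1]
    apply homOn_span
    · rw [← h1]; exact hθ.mono (step_mono Φ hPP')
    · rintro _ ⟨j | k, rfl⟩
      · exact Submodule.mem_sup_left (Submodule.subset_span ⟨j, rfl⟩)
      · exact Submodule.mem_sup_right (tspan_mem τ β (i := 0) (by omega) k)
  have hω : ∀ j, τ (ω j) ∈ Submodule.span ℚ (Set.range ω) ⊔ tspan τ β 1 := by
    intro j
    have haj : a j ∈ P := by rw [← haP]; exact Subgroup.subset_closure ⟨j, rfl⟩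
    simp only [ω]
    rw [← hτθ _ (hPP' haj)]
    exact hstep1 _ (map_mem_step Φ haj)
  set W := Submodule.span ℚ (Set.range ω) with hW
  have hmonoA : Monotone (fun c => W ⊔ tspan τ β c) :=
    fun c c' h => sup_le_sup_left (tspan_mono τ β h) W
  let N : Submodule ℚ ((Fin p' ⊕ Fin r' × ℕ) →₀ ℚ) := ⨆ c, (W ⊔ tspan τ β c)
  have hleN : ∀ c, W ⊔ tspan τ β c ≤ N := fun c => le_iSup (fun c => W ⊔ tspan τ β c) c
  have hτN : N ≤ N.comap τ := by
    apply iSup_le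
    intro c
    apply sup_le
    · rw [hW, Submodule.span_le]
      rintro _ ⟨j, rfl⟩
      exact hleN 1 (hω j)
    · rw [← Submodule.map_le_iff_le_comap]
      exact (tspan_map τ β c).trans (le_sup_right.trans (hleN (c + 1)))
  have hstepN : ∀ R ≤ P', (∀ x ∈ R, (θ x).toAdd ∈ N) → ∀ x ∈ step Φ R, (θ x).toAdd ∈ N := by
    intro R hR h
    have h1 : step Φ R = Subgroup.closure ((R : Set (FreeGroup I)) ∪ (R.map Φ : Subgroup _)) := by
      rw [← Subgroup.sup_eq_closure]; rfl
    rw [h1]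
    apply homOn_span
    · rw [← h1]; exact hθ.mono (step_mono Φ hR)
    · rintro x (hx | ⟨x, hx, rfl⟩)
      · exact h x hx
      · rw [hτθ x (hR hx)]
        exact hτN (h x hx)
  have hP'N : ∀ x ∈ P', (θ x).toAdd ∈ N := by
    have : ∀ R, Der Φ P R → R ≤ P' → ∀ x ∈ R, (θ x).toAdd ∈ N := by
      intro R hR
      induction hR with
      | refl =>
        intro _ x hx
        have h1 : (θ x).toAdd ∈ W := by
          rw [← haP] at hx
          refine homOn_span ?_ W ?_ x hx
          · rw [haP]; exact hθ.mono (hPP'.trans (le_step Φ P'))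
          · rintro _ ⟨j, rfl⟩; exact Submodule.subset_span ⟨j, rfl⟩
        exact hleN 0 (Submodule.mem_sup_left h1)
      | tail _ h ih =>
        intro hle x hx
        have hle' := h.1.trans hle
        exact hstepN _ hle' (ih hle') x (h.2 hx)
    exact this P' hder le_rfl
  have hall := hstepN P' le_rfl hP'N
  let e : Fin r' × ℕ → ((Fin p' ⊕ Fin r' × ℕ) →₀ ℚ) := fun x => Finsupp.single (Sum.inr x) 1
  have he : LinearIndependent ℚ e :=
    (Finsupp.linearIndependent_single_one ℚ (Fin p' ⊕ Fin r' × ℕ)).comp Sum.inr Sum.inr_injective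
  obtain ⟨h1, h2⟩ := linalg_key τ β ω hω e he
    (fun k i => by simp [e, τ])
    (fun k => by
      have h3 := hall (b' k) (by
        rw [← hbP']; exact Subgroup.mem_sup_right (Subgroup.subset_closure ⟨k, rfl⟩))
      rw [hθb] at h3
      exact h3)
  refine ⟨h1, fun hr n hn => (h2 hr n).trans ?_⟩
  have hmem : ∀ i k, (Φ^[i]) (b k) ∈ (step Φ)^[i + 1] P := by
    intro i k
    induction i with
    | zero =>
      have : b k ∈ step Φ P := by
        rw [← hb]; exact Subgroup.mem_sup_right (Subgroup.subset_closure ⟨k, rfl⟩)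
      exact this
    | succ i ih =>
      rw [Function.iterate_succ_apply' Φ, Function.iterate_succ_apply' (step Φ) (i + 1)]
      exact map_mem_step Φ ih
  have hmono : Monotone (fun n => (step Φ)^[n] P) := by
    apply monotone_nat_of_le_succ
    intro n
    simp only [Function.iterate_succ_apply']
    exact le_step Φ _
  have hθi : ∀ i k, i < n → (θ ((Φ^[i]) (b k))).toAdd = (τ ^ i) (β k) := by
    intro i k
    induction i with
    | zero => intro _; rfl
    | succ i ih =>
      intro hi
      rw [Function.iterate_succ_apply', hτθ _ (hn (hmono (by omega : i + 1 ≤ n) (hmem i k))),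
        ih (by omega), pow_succ', Module.End.mul_apply]
  have hnfg : ((step Φ)^[n] P).FG := by
    clear hn hθi
    induction n with
    | zero => exact hP
    | succ n ih => rw [Function.iterate_succ_apply']; exact step_fg Φ ih
  obtain ⟨v, hv⟩ := gens_spec hnfg
  let Z := Submodule.span ℚ (Set.range fun i => (θ (v i)).toAdd)
  have hZf : Module.Finite ℚ Z := Module.Finite.span_of_finite ℚ (Set.finite_range _)
  have hZ : tspan τ β n ≤ Z := by
    apply tspan_le
    intro i hi k
    rw [← hθi i k hi]
    refine homOn_span (S := Set.range v) ?_ Z ?_ _ ?_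
    · rw [hv]; exact hθ.mono (hn.trans (le_step Φ P'))
    · rintro _ ⟨j, rfl⟩; exact Submodule.subset_span ⟨j, rfl⟩
    · rw [hv]; exact hmono (by omega : i + 1 ≤ n) (hmem i k)
  refine (Submodule.finrank_mono hZ).trans ?_
  have := finrank_range_le_card (R := ℚ) (fun i => (θ (v i)).toAdd)
  simp only [Set.finrank, Fintype.card_fin] at this
  exact this

end der

end MTProof


namespace MTProof

section good

variable {I : Type} (Φ : FreeGroup I →* FreeGroup I)

lemma iter_step_fg {P : Subgroup (FreeGroup I)} (hP : P.FG) (n : ℕ) : ((step Φ)^[n] P).FG := by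
  induction n with
  | zero => exact hP
  | succ n ih => rw [Function.iterate_succ_apply']; exact step_fg Φ ih

lemma map_closure_range {α : Type} (b : α → FreeGroup I) (n : ℕ) :
    (Subgroup.closure (Set.range fun k => Φ^[n] (b k))).map Φ =
      Subgroup.closure (Set.range fun k => Φ^[n + 1] (b k)) := by
  rw [MonoidHom.map_closure, ← Set.range_comp]
  congr 2
  funext k
  exact (Function.iterate_succ_apply' Φ n (b k)).symm

lemma iter_step_succ {P : Subgroup (FreeGroup I)} {α : Type} {b : α → FreeGroup I}
    (hb : P ⊔ Subgroup.closure (Set.range b) = step Φ P) (n : ℕ) :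
    (step Φ)^[n + 1] P = (step Φ)^[n] P ⊔ Subgroup.closure (Set.range fun k => Φ^[n] (b k)) := by
  induction n with
  | zero => exact hb.symm
  | succ n ih =>
    rw [Function.iterate_succ_apply' (step Φ) (n + 1)]
    have key : ((step Φ)^[n + 1] P).map Φ = ((step Φ)^[n] P).map Φ ⊔
        Subgroup.closure (Set.range fun k => Φ^[n + 1] (b k)) := by
      rw [ih, Subgroup.map_sup, map_closure_range]
    have h2 : ((step Φ)^[n] P).map Φ ≤ (step Φ)^[n + 1] P := by
      rw [Function.iterate_succ_apply' (step Φ)]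
      exact le_sup_right
    change (step Φ)^[n + 1] P ⊔ ((step Φ)^[n + 1] P).map Φ = _
    rw [key, ← sup_assoc, sup_eq_left.2 h2]

lemma closure_range_fin_succ {G : Type} [Group G] {r : ℕ} (g : Fin r → ℕ → G) (n : ℕ) :
    Subgroup.closure (Set.range fun x : Fin r × Fin (n + 1) => g x.1 x.2) =
      Subgroup.closure (Set.range fun x : Fin r × Fin n => g x.1 x.2) ⊔
        Subgroup.closure (Set.range fun k => g k n) := by
  rw [← Subgroup.closure_union]
  congr 1
  ext y
  constructor
  · rintro ⟨⟨k, i⟩, rfl⟩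
    by_cases h : (i : ℕ) < n
    · left; exact ⟨(k, ⟨i, h⟩), rfl⟩
    · right; exact ⟨k, congrArg (g k) (by omega : n = (i : ℕ))⟩
  · rintro (⟨⟨k, i⟩, rfl⟩ | ⟨k, rfl⟩)
    · exact ⟨(k, i.castSucc), rfl⟩
    · exact ⟨(k, Fin.last n), rfl⟩

lemma freeOn_limit {G : Type} [Group G] {m r : ℕ} (a : Fin m → G) (g : Fin r → ℕ → G)
    (h : ∀ n, FreeOn (Sum.elim a (fun x : Fin r × Fin n => g x.1 x.2))) :
    FreeOn (Sum.elim a (fun x : Fin r × ℕ => g x.1 x.2)) := by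
  unfold FreeOn
  rw [injective_iff_map_eq_one]
  intro z hz
  have hz1 : z ∈ Subgroup.closure (Set.range (FreeGroup.of (α := Fin m ⊕ Fin r × ℕ))) := by
    rw [FreeGroup.closure_range_of]; trivial
  obtain ⟨s, hs, hzs⟩ := mem_closure_finset _ hz1
  let ht : Fin m ⊕ Fin r × ℕ → ℕ := Sum.elim (fun _ => 0) (fun x => x.2)
  obtain ⟨n, hn⟩ : ∃ n, ∀ x ∈ s, ht x < n := by
    obtain ⟨n, hn⟩ := (hs.image ht).bddAbove
    exact ⟨n + 1, fun x hx => Nat.lt_succ_of_le (hn ⟨x, hx, rfl⟩)⟩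
  let inc : Fin m ⊕ Fin r × Fin n → Fin m ⊕ Fin r × ℕ := Sum.map id (fun x => (x.1, (x.2 : ℕ)))
  have hle : Subgroup.closure (FreeGroup.of '' s) ≤ (FreeGroup.map inc).range := by
    rw [Subgroup.closure_le]
    rintro _ ⟨x, hx, rfl⟩
    have h1 := hn x hx
    rcases x with j | ⟨k, i⟩
    · exact ⟨FreeGroup.of (Sum.inl j), by simp [inc]⟩
    · exact ⟨FreeGroup.of (Sum.inr (k, ⟨i, h1⟩)), by simp [inc]⟩
  obtain ⟨z', rfl⟩ := hle hzs
  have h2 : (FreeGroup.lift (Sum.elim a (fun x : Fin r × ℕ => g x.1 x.2))).comp (FreeGroup.map inc) =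
      FreeGroup.lift (Sum.elim a (fun x : Fin r × Fin n => g x.1 x.2)) := by
    ext x
    rcases x with j | ⟨k, i⟩ <;> simp [inc]
  have h3 : FreeGroup.lift (Sum.elim a (fun x : Fin r × Fin n => g x.1 x.2)) z' = 1 := by
    rw [← h2]; exact hz
  have h4 := (injective_iff_map_eq_one _).1 (h n) z' h3
  rw [h4, map_one]

lemma exists_good {R : Subgroup (FreeGroup I)} (hR : R.FG) :
    ∃ (m r : ℕ) (a : Fin m → FreeGroup I) (b : Fin r → FreeGroup I),
      Der Φ R (Subgroup.closure (Set.range a)) ∧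
      step Φ (Subgroup.closure (Set.range a)) =
        Subgroup.closure (Set.range a) ⊔ Subgroup.closure (Set.range b) ∧
      FreeOn (Sum.elim a (fun x : Fin r × ℕ => Φ^[x.2] (b x.1))) := by
  classical
  let S : Set ℕ := {r | ∃ P : Subgroup (FreeGroup I), P.FG ∧ Der Φ R P ∧ Tight Φ P r}
  have hS : S.Nonempty := by
    obtain ⟨P, h1, -, h2, h3⟩ := exists_tight Φ hR
    obtain ⟨r, hr⟩ := tight_of_FF Φ h1 h3
    exact ⟨r, P, h1, h2, hr⟩
  obtain ⟨r, hrS, hrmin⟩ : ∃ r ∈ S, ∀ r' ∈ S, r ≤ r' :=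
    ⟨sInf S, Nat.sInf_mem hS, fun r' h => Nat.sInf_le h⟩
  obtain ⟨P, hP, hder, -, -, b, -, -, hb⟩ := hrS
  have hgens : ∀ n, r * n ≤ gens ((step Φ)^[n] P) := by
    intro n
    obtain ⟨P', h1, h2, h3, h4⟩ := exists_tight Φ (iter_step_fg Φ hP n)
    obtain ⟨r', hr'⟩ := tight_of_FF Φ h1 h4
    have hd : Der Φ P P' := Relation.ReflTransGen.trans (der_iter Φ P n) h3
    obtain ⟨h5, h6⟩ := der_key Φ hP hb hd hr'
    have h7 := hrmin r' ⟨P', h1, Relation.ReflTransGen.trans hder hd, hr'⟩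
    exact h6 (le_antisymm h5 h7) n h2
  obtain ⟨N, hN⟩ : ∃ N, ∀ n, gens ((step Φ)^[N] P) - r * N ≤ gens ((step Φ)^[n] P) - r * n := by
    obtain ⟨N, hN⟩ := Nat.sInf_mem (Set.range_nonempty (fun n => gens ((step Φ)^[n] P) - r * n))
    refine ⟨N, fun n => ?_⟩
    have h1 : sInf (Set.range (fun n => gens ((step Φ)^[n] P) - r * n)) ≤ _ := Nat.sInf_le ⟨n, rfl⟩
    rw [← hN] at h1
    exact h1
  obtain ⟨a, ha⟩ := gens_spec (iter_step_fg Φ hP N)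
  let B : Fin r → FreeGroup I := fun k => Φ^[N] (b k)
  have hBi : ∀ i k, Φ^[i] (B k) = Φ^[N + i] (b k) := by
    intro i k
    simp only [B]
    rw [add_comm, Function.iterate_add_apply]
  refine ⟨_, r, a, B, ?_, ?_, ?_⟩
  · rw [ha]
    exact Relation.ReflTransGen.trans hder (der_iter Φ P N)
  · rw [ha, ← Function.iterate_succ_apply' (step Φ), iter_step_succ Φ hb]
  · apply freeOn_limit a (fun k i => Φ^[i] (B k))
    intro n
    have hcl : Subgroup.closure (Set.range (Sum.elim a (fun x : Fin r × Fin n => Φ^[x.2] (B x.1)))) =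
        (step Φ)^[N + n] P := by
      rw [closure_range_sumElim, ha]
      induction n with
      | zero =>
        have : (Set.range fun x : Fin r × Fin 0 => Φ^[x.2] (B x.1)) = ∅ := by
          rw [Set.range_eq_empty_iff]; infer_instance
        rw [this, Subgroup.closure_empty, sup_bot_eq]; rfl
      | succ n ih =>
        have h1 := closure_range_fin_succ (fun k i => Φ^[i] (B k)) n
        rw [h1, ← sup_assoc, ih, ← add_assoc, iter_step_succ Φ hb]
        simp only [hBi]
    apply freeOn_of_min
    rw [hcl, Nat.card_sum, Nat.card_prod, Nat.card_fin, Nat.card_fin, Nat.card_fin]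
    have h1 := hN (N + n)
    have h2 := hgens N
    have h3 := hgens (N + n)
    rw [mul_add] at h1 h3
    omega

end good
end MTProof

namespace MTProof

section final

lemma pow_conj {G E : Type} [Group G] [Group E] (s : G) (η : E →* G) (Ψ : E →* E)
    (h : ∀ z, s * η z * s⁻¹ = η (Ψ z)) (n : ℕ) (z : E) : s ^ n * η z = η (Ψ^[n] z) * s ^ n := by
  have h' : ∀ z, s * η z = η (Ψ z) * s := by
    intro z; rw [← h]; group
  induction n with
  | zero => simp
  | succ n ih =>
    rw [pow_succ', mul_assoc, ih, ← mul_assoc, h', Function.iterate_succ_apply', mul_assoc]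

lemma normal_form {G E : Type} [Group G] [Group E] (s : G) (η : E →* G) (Ψ : E →* E)
    (h : ∀ z, s * η z * s⁻¹ = η (Ψ z)) (S : Set G) (hS : ∀ g ∈ S, g = s ∨ g ∈ η.range)
    (g : G) (hg : g ∈ Subgroup.closure S) :
    ∃ (i j : ℕ) (z : E), g = (s ^ i)⁻¹ * η z * s ^ j := by
  have hp := pow_conj s η Ψ h
  induction hg using Subgroup.closure_induction with
  | mem g hg =>
    rcases hS g hg with rfl | ⟨z, rfl⟩
    · exact ⟨0, 1, 1, by simp⟩
    · exact ⟨0, 0, z, by simp⟩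
  | one => exact ⟨0, 0, 1, by simp⟩
  | inv g _ ih =>
    obtain ⟨i, j, z, rfl⟩ := ih
    exact ⟨j, i, z⁻¹, by rw [map_inv]; group⟩
  | mul g g' _ _ h1 h2 =>
    obtain ⟨i, j, z, rfl⟩ := h1
    obtain ⟨i', j', z', rfl⟩ := h2
    rcases le_total i' j with hij | hij
    · obtain ⟨d, rfl⟩ := Nat.exists_eq_add_of_le hij
      refine ⟨i, d + j', z * Ψ^[d] z', ?_⟩
      have h3 : s ^ (i' + d) * (s ^ i')⁻¹ = s ^ d := by
        rw [add_comm, pow_add]; group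
      calc (s ^ i)⁻¹ * η z * s ^ (i' + d) * ((s ^ i')⁻¹ * η z' * s ^ j')
          = (s ^ i)⁻¹ * η z * ((s ^ (i' + d) * (s ^ i')⁻¹) * η z') * s ^ j' := by
            simp only [mul_assoc]
        _ = _ := by rw [h3, hp, map_mul, pow_add]; simp only [mul_assoc]
    · obtain ⟨d, rfl⟩ := Nat.exists_eq_add_of_le hij
      refine ⟨d + i, j', Ψ^[d] z * z', ?_⟩
      have h3 : s ^ j * (s ^ (j + d))⁻¹ = (s ^ d)⁻¹ := by
        rw [pow_add]; group
      have h4 : η z * (s ^ d)⁻¹ = (s ^ d)⁻¹ * η (Ψ^[d] z) := by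
        rw [eq_inv_mul_iff_mul_eq, ← mul_assoc, hp, mul_inv_cancel_right]
      calc (s ^ i)⁻¹ * η z * s ^ j * ((s ^ (j + d))⁻¹ * η z' * s ^ j')
          = (s ^ i)⁻¹ * (η z * (s ^ j * (s ^ (j + d))⁻¹)) * η z' * s ^ j' := by
            simp only [mul_assoc]
        _ = _ := by rw [h3, h4, map_mul, pow_add, mul_inv_rev]; simp only [mul_assoc]

variable {I : Type} (Φ : FreeGroup I →* FreeGroup I)

lemma mt_rel (z : FreeGroup I) : mtT Φ * mtι Φ z * (mtT Φ)⁻¹ = mtι Φ (Φ z) := by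
  have : ((MulAut.conj (mtT Φ)).toMonoidHom).comp (mtι Φ) = (mtι Φ).comp Φ := by
    ext i
    have h1 : PresentedGroup.mk (mtRels Φ)
      (FreeGroup.of (none : Option I) * FreeGroup.of (some i) * (FreeGroup.of (none : Option I))⁻¹ *
      (FreeGroup.map some (Φ (FreeGroup.of i)))⁻¹) = 1 :=
      PresentedGroup.one_of_mem ⟨i, rfl⟩
    rw [map_mul, map_inv, mul_inv_eq_one, map_mul, map_mul, map_inv] at h1
    simpa [mtι, mtT, PresentedGroup.of] using h1
  exact DFunLike.congr_fun this z

lemma mt_ext_gen (g : MT Φ) : ∃ (i j : ℕ) (z : FreeGroup I),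
    g = (mtT Φ ^ i)⁻¹ * mtι Φ z * mtT Φ ^ j := by
  refine normal_form (mtT Φ) (mtι Φ) Φ (mt_rel Φ) (Set.range PresentedGroup.of) ?_ g ?_
  · rintro _ ⟨x | i, rfl⟩
    · left; rfl
    · right; exact ⟨FreeGroup.of i, by simp [mtι, PresentedGroup.of]⟩
  · rw [PresentedGroup.closure_range_of]; trivial

lemma mt_inj (hΦ : Function.Injective Φ) : Function.Injective (mtι Φ) := by
  let φ : (⊤ : Subgroup (FreeGroup I)) ≃* Φ.range :=
    Subgroup.topEquiv.trans (MonoidHom.ofInjective hΦ)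
  let f : Option I → HNNExtension (FreeGroup I) ⊤ Φ.range φ :=
    fun o => o.elim HNNExtension.t (fun i => HNNExtension.of (FreeGroup.of i))
  have hmap : ∀ x, FreeGroup.lift f (FreeGroup.map some x) = HNNExtension.of x := by
    intro x
    have : (FreeGroup.lift f).comp (FreeGroup.map some) = HNNExtension.of := by
      ext i; simp [f]
    exact DFunLike.congr_fun this x
  have hrel : ∀ x ∈ mtRels Φ, FreeGroup.lift f x = 1 := by
    rintro _ ⟨i, rfl⟩
    simp only [map_mul, map_inv, hmap, FreeGroup.lift_apply_of]
    rw [mul_inv_eq_one, mul_inv_eq_iff_eq_mul]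
    exact HNNExtension.t_mul_of (φ := φ) ⟨FreeGroup.of i, trivial⟩
  have hcomp : ∀ x, PresentedGroup.toGroup hrel (mtι Φ x) = HNNExtension.of x := by
    intro x
    rw [← hmap]; rfl
  intro x y hxy
  apply HNNExtension.of_injective (φ := φ)
  rw [← hcomp, ← hcomp, hxy]

lemma mt_deg : ∃ d : MT Φ →* Multiplicative ℤ, d (mtT Φ) = Multiplicative.ofAdd 1 ∧
    ∀ z, d (mtι Φ z) = 1 := by
  let f : Option I → Multiplicative ℤ := fun o => o.elim (Multiplicative.ofAdd 1) (fun _ => 1)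
  have hmap : ∀ x, FreeGroup.lift f (FreeGroup.map some x) = 1 := by
    intro x
    have : (FreeGroup.lift f).comp (FreeGroup.map some) = 1 := by
      ext i; simp [f]
    exact DFunLike.congr_fun this x
  have hrel : ∀ x ∈ mtRels Φ, FreeGroup.lift f x = 1 := by
    rintro _ ⟨i, rfl⟩
    simp only [map_mul, map_inv, hmap, FreeGroup.lift_apply_of]
    simp [f]
  refine ⟨PresentedGroup.toGroup hrel, ?_, ?_⟩
  · exact PresentedGroup.toGroup.of hrel
  · intro z
    rw [← hmap z]; rfl

lemma exists_R (H : Subgroup (MT Φ)) (hH : H.FG) (ht : mtT Φ ∈ H) :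
    ∃ R : Subgroup (FreeGroup I), R.FG ∧ R ≤ H.comap (mtι Φ) ∧
      H ≤ Subgroup.closure ({mtT Φ} ∪ (R.map (mtι Φ) : Set (MT Φ))) := by
  obtain ⟨n, v, hv⟩ := exists_genBy hH
  choose i j z hz using fun k => mt_ext_gen Φ (v k)
  refine ⟨Subgroup.closure (Set.range z), GenBy.fg ⟨z, rfl⟩, ?_, ?_⟩
  · rw [Subgroup.closure_le]
    rintro _ ⟨k, rfl⟩
    have h1 : mtι Φ (z k) = mtT Φ ^ i k * v k * (mtT Φ ^ j k)⁻¹ := by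
      rw [hz k]; group
    change mtι Φ (z k) ∈ H
    rw [h1]
    refine H.mul_mem (H.mul_mem (H.pow_mem ht _) ?_) (H.inv_mem (H.pow_mem ht _))
    rw [← hv]; exact Subgroup.subset_closure ⟨k, rfl⟩
  · rw [← hv, Subgroup.closure_le]
    rintro _ ⟨k, rfl⟩
    have ht' : mtT Φ ∈ Subgroup.closure ({mtT Φ} ∪
        ((Subgroup.closure (Set.range z)).map (mtι Φ) : Set (MT Φ))) :=
      Subgroup.subset_closure (Or.inl rfl)
    rw [hz k]
    refine Subgroup.mul_mem _ (Subgroup.mul_mem _ (Subgroup.inv_mem _ (Subgroup.pow_mem _ ht' _)) ?_)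
      (Subgroup.pow_mem _ ht' _)
    apply Subgroup.subset_closure
    right
    exact ⟨z k, Subgroup.subset_closure ⟨k, rfl⟩, rfl⟩

lemma step_le_comap {H : Subgroup (MT Φ)} (ht : mtT Φ ∈ H) {P : Subgroup (FreeGroup I)}
    (hP : P ≤ H.comap (mtι Φ)) : step Φ P ≤ H.comap (mtι Φ) := by
  refine sup_le hP ?_
  rintro _ ⟨x, hx, rfl⟩
  change mtι Φ (Φ x) ∈ H
  rw [← mt_rel]
  exact H.mul_mem (H.mul_mem ht (hP hx)) (H.inv_mem ht)

lemma Der.le_comap {H : Subgroup (MT Φ)} (ht : mtT Φ ∈ H) {P P' : Subgroup (FreeGroup I)}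
    (hP : P ≤ H.comap (mtι Φ)) (h : Der Φ P P') : P' ≤ H.comap (mtι Φ) := by
  induction h with
  | refl => exact hP
  | tail _ h ih => exact h.2.trans (step_le_comap Φ ht ih)

/-- the map from the preferred presentation is injective -/
lemma pres_inj (hΦ : Function.Injective Φ) {m r : ℕ} (a : Fin m → FreeGroup I)
    (b : Fin r → FreeGroup I) (w : Fin m → FreeGroup (Fin m ⊕ Fin r))
    (hfree : FreeOn (Sum.elim a (fun x : Fin r × ℕ => Φ^[x.2] (b x.1))))
    (e0 : PresentedGroup (prefRels m r w) →* MT Φ)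
    (he : e0 (PresentedGroup.of none) = mtT Φ)
    (hea : ∀ j, e0 (PresentedGroup.of (some (Sum.inl j))) = mtι Φ (a j))
    (heb : ∀ k, e0 (PresentedGroup.of (some (Sum.inr k))) = mtι Φ (b k)) :
    Function.Injective e0 := by
  let s : PresentedGroup (prefRels m r w) := PresentedGroup.of none
  let x : Fin m → PresentedGroup (prefRels m r w) := fun j => PresentedGroup.of (some (Sum.inl j))
  let y : Fin r → PresentedGroup (prefRels m r w) := fun k => PresentedGroup.of (some (Sum.inr k))
  let η : FreeGroup (Fin m ⊕ Fin r × ℕ) →* PresentedGroup (prefRels m r w) :=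
    FreeGroup.lift (Sum.elim x (fun u => s ^ u.2 * y u.1 * (s ^ u.2)⁻¹))
  let inc : Fin m ⊕ Fin r → Fin m ⊕ Fin r × ℕ := Sum.map id (fun k => (k, 0))
  let Ψ : FreeGroup (Fin m ⊕ Fin r × ℕ) →* FreeGroup (Fin m ⊕ Fin r × ℕ) :=
    FreeGroup.lift (Sum.elim (fun j => FreeGroup.map inc (w j))
      (fun u => FreeGroup.of (Sum.inr (u.1, u.2 + 1))))
  have hinc : η.comp (FreeGroup.map inc) =
      (PresentedGroup.mk (prefRels m r w)).comp (FreeGroup.map some) := by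
    ext u
    rcases u with j | k
    · simp [η, inc, x, PresentedGroup.of]
    · simp [η, inc, y, PresentedGroup.of]
  have hconj : ∀ z, s * η z * s⁻¹ = η (Ψ z) := by
    have : ((MulAut.conj s).toMonoidHom).comp η = η.comp Ψ := by
      ext u
      rcases u with j | ⟨k, i⟩
      · have h1 : PresentedGroup.mk (prefRels m r w)
          (FreeGroup.of (none : Option (Fin m ⊕ Fin r)) * FreeGroup.of (some (Sum.inl j)) *
          (FreeGroup.of (none : Option (Fin m ⊕ Fin r)))⁻¹ *
          (FreeGroup.map some (w j))⁻¹) = 1 := PresentedGroup.one_of_mem ⟨j, rfl⟩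
        rw [map_mul, map_inv, mul_inv_eq_one, map_mul, map_mul, map_inv] at h1
        have h2 := DFunLike.congr_fun hinc (w j)
        simp only [MonoidHom.comp_apply] at h2 ⊢
        rw [← h2] at h1
        have h3 : Ψ (FreeGroup.of (Sum.inl j)) = FreeGroup.map inc (w j) := by simp [Ψ]
        have h4 : η (FreeGroup.of (Sum.inl j)) = x j := by simp [η]
        rw [h3, h4]
        exact h1
      · simp [η, Ψ, pow_succ', mul_assoc]
    intro z
    exact DFunLike.congr_fun this z
  have hcomp : ∀ z, e0 (η z) = mtι Φ (FreeGroup.lift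
      (Sum.elim a (fun x : Fin r × ℕ => Φ^[x.2] (b x.1))) z) := by
    have : e0.comp η = (mtι Φ).comp (FreeGroup.lift
      (Sum.elim a (fun x : Fin r × ℕ => Φ^[x.2] (b x.1)))) := by
      ext u
      rcases u with j | ⟨k, i⟩
      · simp [η, x, hea]
      · have h1 := pow_conj (mtT Φ) (mtι Φ) Φ (mt_rel Φ) i (b k)
        simp only [MonoidHom.comp_apply, η, FreeGroup.lift_apply_of, Sum.elim_inr, map_mul, map_inv,
          map_pow]
        rw [show e0 s = mtT Φ from he, show e0 (y k) = mtι Φ (b k) from heb k, h1,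
          mul_inv_cancel_right]
    intro z
    exact DFunLike.congr_fun this z
  rw [injective_iff_map_eq_one]
  intro g hg
  obtain ⟨i, j, z, rfl⟩ := normal_form s η Ψ hconj (Set.range PresentedGroup.of) (by
      rintro _ ⟨u | j | k, rfl⟩
      · left; rfl
      · right; exact ⟨FreeGroup.of (Sum.inl j), by simp [η, x]⟩
      · right; exact ⟨FreeGroup.of (Sum.inr (k, 0)), by simp [η, y]⟩) g
    (by rw [PresentedGroup.closure_range_of]; trivial)
  obtain ⟨d, hd1, hd2⟩ := mt_deg Φ
  rw [map_mul, map_mul, map_inv, map_pow, map_pow, hcomp, show e0 s = mtT Φ from he] at hg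
  have hij : i = j := by
    have h1 := congrArg d hg
    rw [map_mul, map_mul, map_inv, map_pow, map_pow, hd1, hd2, d.map_one, mul_one,
      inv_mul_eq_one] at h1
    have h2 := congrArg Multiplicative.toAdd h1
    simpa using h2
  subst hij
  have h3 : mtι Φ (FreeGroup.lift (Sum.elim a (fun x : Fin r × ℕ => Φ^[x.2] (b x.1))) z) = 1 := by
    rw [mul_assoc, inv_mul_eq_one] at hg
    have h6 := congrArg (fun g => g * (mtT Φ ^ i)⁻¹) hg
    simpa using h6.symm
  have h4 := (injective_iff_map_eq_one _).1 (mt_inj Φ hΦ) _ h3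
  have h5 := (injective_iff_map_eq_one _).1 hfree _ h4
  rw [h5, map_one]; group

end final

end MTProof

/-- **Main Proposition.** If `H` is a finitely generated subgroup of `M(Φ)` containing `t`,
then `H` has a preferred presentation `⟨t, a₁, …, a_m, b₁, …, b_r | t a_j t⁻¹ w_j⁻¹⟩` with
`w_j = Φ(a_j)` and `⟨A, Φ(A)⟩ = ⟨A, B⟩`. -/
theorem main_proposition {I : Type} (Φ : FreeGroup I →* FreeGroup I)
    (hΦ : Function.Injective Φ) (H : Subgroup (MT Φ)) (hH : H.FG) (ht : mtT Φ ∈ H) :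
    ∃ (m r : ℕ) (a : Fin m → FreeGroup I) (b : Fin r → FreeGroup I)
      (w : Fin m → FreeGroup (Fin m ⊕ Fin r)),
      -- (i) `H = ⟨t, a₁, …, a_m⟩`
      H = Subgroup.closure ({mtT Φ} ∪ Set.range fun j => mtι Φ (a j)) ∧
      -- (ii) evaluating `w_j` under `x_j ↦ a_j`, `y_k ↦ b_k` gives `Φ(a_j)`
      (∀ j : Fin m, FreeGroup.lift (Sum.elim a b) (w j) = Φ (a j)) ∧
      -- (iii) `⟨A, Φ(A)⟩ = ⟨A, B⟩`
      Subgroup.closure (Set.range a ∪ Set.range fun j => Φ (a j)) =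
        Subgroup.closure (Set.range a ∪ Set.range b) ∧
      -- (iv) `s ↦ t`, `x_j ↦ ι(a_j)`, `y_k ↦ ι(b_k)` induces an isomorphism
      -- `⟨s, x_j, y_k | s x_j s⁻¹ w_j⁻¹⟩ ≃ H`
      ∃ e : PresentedGroup (prefRels m r w) ≃* H,
        ((e (PresentedGroup.of none) : H) : MT Φ) = mtT Φ ∧
        (∀ j : Fin m, ((e (PresentedGroup.of (some (Sum.inl j))) : H) : MT Φ) = mtι Φ (a j)) ∧
        (∀ k : Fin r, ((e (PresentedGroup.of (some (Sum.inr k))) : H) : MT Φ) = mtι Φ (b k)) := by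
  obtain ⟨R, hR, hRH, hHR⟩ := MTProof.exists_R Φ H hH ht
  obtain ⟨m, r, a, b, hder, hstep, hfree⟩ := MTProof.exists_good Φ hR
  have hA : Subgroup.closure (Set.range a) ≤ H.comap (mtι Φ) := hder.le_comap Φ ht hRH
  have hA1 := MTProof.step_le_comap Φ ht hA
  have haH : ∀ j, mtι Φ (a j) ∈ H := fun j => hA (Subgroup.subset_closure ⟨j, rfl⟩)
  have hbH : ∀ k, mtι Φ (b k) ∈ H := fun k => hA1 (by
    rw [hstep]; exact Subgroup.mem_sup_right (Subgroup.subset_closure ⟨k, rfl⟩))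
  have hi : H = Subgroup.closure ({mtT Φ} ∪ Set.range fun j => mtι Φ (a j)) := by
    apply le_antisymm
    · refine hHR.trans ?_
      rw [Subgroup.closure_le]
      rintro x (hx | ⟨z, hz, rfl⟩)
      · exact Subgroup.subset_closure (Or.inl hx)
      · have h1 : Subgroup.closure (Set.range a) ≤ (Subgroup.closure ({mtT Φ} ∪
            Set.range fun j => mtι Φ (a j))).comap (mtι Φ) := by
          rw [Subgroup.closure_le]
          rintro _ ⟨j, rfl⟩
          exact Subgroup.subset_closure (Or.inr ⟨j, rfl⟩)
        exact h1 (MTProof.Der.le Φ hder hz)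
    · rw [Subgroup.closure_le]
      rintro x (hx | ⟨j, rfl⟩)
      · rw [Set.mem_singleton_iff.1 hx]; exact ht
      · exact haH j
  have hw : ∀ j, ∃ w, FreeGroup.lift (Sum.elim a b) w = Φ (a j) := by
    intro j
    have h1 : Φ (a j) ∈ MTProof.step Φ (Subgroup.closure (Set.range a)) :=
      MTProof.map_mem_step Φ (Subgroup.subset_closure ⟨j, rfl⟩)
    rw [hstep, ← MTProof.closure_range_sumElim, ← FreeGroup.range_lift_eq_closure] at h1
    exact h1
  choose w hw using hw
  refine ⟨m, r, a, b, w, hi, hw, ?_, ?_⟩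
  · rw [Subgroup.closure_union, Subgroup.closure_union, ← hstep]
    unfold MTProof.step
    rw [MonoidHom.map_closure, ← Set.range_comp]
    rfl
  · let f : Option (Fin m ⊕ Fin r) → MT Φ := fun o =>
      o.elim (mtT Φ) (Sum.elim (fun j => mtι Φ (a j)) (fun k => mtι Φ (b k)))
    have hmap : ∀ x, FreeGroup.lift f (FreeGroup.map some x) =
        mtι Φ (FreeGroup.lift (Sum.elim a b) x) := by
      intro x
      have : (FreeGroup.lift f).comp (FreeGroup.map some) =
          (mtι Φ).comp (FreeGroup.lift (Sum.elim a b)) := by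
        ext u
        rcases u with j | k <;> simp [f]
      exact DFunLike.congr_fun this x
    have hrel : ∀ x ∈ prefRels m r w, FreeGroup.lift f x = 1 := by
      rintro _ ⟨j, rfl⟩
      simp only [map_mul, map_inv, hmap, FreeGroup.lift_apply_of, hw]
      rw [mul_inv_eq_one]
      exact MTProof.mt_rel Φ (a j)
    let e0 := PresentedGroup.toGroup hrel
    have he0 : ∀ o, e0 (PresentedGroup.of o) = f o := fun o => PresentedGroup.toGroup.of hrel
    have hinj := MTProof.pres_inj Φ hΦ a b w hfree e0 (he0 none) (fun j => he0 (some (Sum.inl j)))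
      (fun k => he0 (some (Sum.inr k)))
    have hrange : e0.range = H := by
      rw [MonoidHom.range_eq_map, ← PresentedGroup.closure_range_of, MonoidHom.map_closure,
        ← Set.range_comp]
      apply le_antisymm
      · rw [Subgroup.closure_le]
        rintro _ ⟨o, rfl⟩
        rw [Function.comp_apply, he0]
        rcases o with _ | j | k
        · exact ht
        · exact haH j
        · exact hbH k
      · rw [hi, Subgroup.closure_le]
        rintro x (hx | ⟨j, rfl⟩)
        · rw [Set.mem_singleton_iff.1 hx]
          exact Subgroup.subset_closure ⟨none, he0 none⟩
        · exact Subgroup.subset_closure ⟨some (Sum.inl j), he0 (some (Sum.inl j))⟩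
    refine ⟨(MonoidHom.ofInjective hinj).trans (MulEquiv.subgroupCongr hrange), ?_, ?_, ?_⟩
    · exact he0 none
    · intro j; exact he0 (some (Sum.inl j))
    · intro k; exact he0 (some (Sum.inr k))
end

section
/- Fix an integer m ≥ 1 and an element b ∈ 𝔽, and define Θ : 𝔽 → 𝔽 by Θ(x) = b · Φ^m(x) · b⁻¹. Then Θ is an injective endomorphism of 𝔽, and there is a group isomorphism from the mapping torus M(Θ) = ⟨s, e_i (i ∈ I) | s e_i s⁻¹ Θ(e_i)⁻¹ (i ∈ I)⟩ onto the subgroup of M(Φ) generated by ι(𝔽) ∪ {t^m}, sending s ↦ ι(b) · t^m and sending each generator e_i of M(Θ) to ι(e_i). -/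
theorem mt_conj {I : Type} (Φ : FreeGroup I →* FreeGroup I) (x : FreeGroup I) :
    mtT Φ * mtι Φ x * (mtT Φ)⁻¹ = mtι Φ (Φ x) := by
  have h : (MulAut.conj (mtT Φ)).toMonoidHom.comp (mtι Φ) = (mtι Φ).comp Φ := by
    ext i
    have h1 : PresentedGroup.mk (mtRels Φ) (FreeGroup.of (none : Option I) *
        FreeGroup.of (some i) * (FreeGroup.of (none : Option I))⁻¹ *
        (FreeGroup.map some (Φ (FreeGroup.of i)))⁻¹) = 1 :=
      PresentedGroup.one_of_mem ⟨i, rfl⟩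
    rw [map_mul, map_inv, mul_inv_eq_one, map_mul, map_mul, map_inv] at h1
    simp only [MonoidHom.comp_apply, MulEquiv.coe_toMonoidHom, MulAut.conj_apply, mtι,
      FreeGroup.map.of]
    exact h1
  exact DFunLike.congr_fun h x

theorem mt_conj_pow {I : Type} (Φ : FreeGroup I →* FreeGroup I) (n : ℕ) (x : FreeGroup I) :
    mtT Φ ^ n * mtι Φ x * (mtT Φ ^ n)⁻¹ = mtι Φ ((⇑Φ)^[n] x) := by
  induction n with
  | zero => simp
  | succ n ih =>
    rw [Function.iterate_succ_apply', ← mt_conj, ← ih, pow_succ']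
    group

/-- The universal property of the mapping torus. -/
theorem mt_lift {I : Type} (Φ : FreeGroup I →* FreeGroup I) {G : Type} [Group G]
    (f : FreeGroup I →* G) (s : G) (h : ∀ x, s * f x * s⁻¹ = f (Φ x)) :
    ∃ F : MT Φ →* G, F (mtT Φ) = s ∧ ∀ x, F (mtι Φ x) = f x := by
  let g : Option I → G := fun o => o.elim s (fun i => f (FreeGroup.of i))
  have hg : ∀ x, FreeGroup.lift g (FreeGroup.map some x) = f x := by
    intro x
    have : (FreeGroup.lift g).comp (FreeGroup.map some) = f := by
      ext i
      simp [g]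
    exact DFunLike.congr_fun this x
  have hr : ∀ r ∈ mtRels Φ, FreeGroup.lift g r = 1 := by
    rintro _ ⟨i, rfl⟩
    simp only [map_mul, map_inv, hg, FreeGroup.lift_apply_of]
    rw [mul_inv_eq_one, ← h]
    rfl
  refine ⟨PresentedGroup.toGroup hr, ?_, fun x => ?_⟩
  · exact PresentedGroup.toGroup.of hr
  · exact hg x

theorem mtι_injective {I : Type} (Φ : FreeGroup I →* FreeGroup I)
    (hΦ : Function.Injective Φ) : Function.Injective (mtι Φ) := by
  let φ : (⊤ : Subgroup (FreeGroup I)) ≃* Φ.range :=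
    Subgroup.topEquiv.trans (MonoidHom.ofInjective hΦ)
  obtain ⟨F, -, hF⟩ := mt_lift Φ (HNNExtension.of (φ := φ)) HNNExtension.t (by
    intro x
    have := HNNExtension.equiv_eq_conj (φ := φ) ⟨x, trivial⟩
    exact this.symm)
  intro x y hxy
  apply HNNExtension.of_injective (φ := φ)
  rw [← hF, ← hF, hxy]

theorem mt_gen_induction {I : Type} (Φ : FreeGroup I →* FreeGroup I) (H : Subgroup (MT Φ))
    (hT : mtT Φ ∈ H) (hi : ∀ i, mtι Φ (FreeGroup.of i) ∈ H) (g : MT Φ) : g ∈ H := by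
  have h : Subgroup.closure (Set.range (PresentedGroup.of (rels := mtRels Φ))) ≤ H := by
    rw [Subgroup.closure_le]
    rintro _ ⟨_ | i, rfl⟩
    · exact hT
    · exact hi i
  rw [PresentedGroup.closure_range_of] at h
  exact h trivial

theorem mt_form {I : Type} (Φ : FreeGroup I →* FreeGroup I) (g : MT Φ) :
    ∃ (a c : ℕ) (x : FreeGroup I), g = (mtT Φ ^ a)⁻¹ * mtι Φ x * mtT Φ ^ c := by
  have hg : g ∈ Subgroup.closure (Set.range (mtι Φ) ∪ {mtT Φ}) :=
    mt_gen_induction Φ _ (Subgroup.subset_closure (Or.inr rfl))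
      (fun i => Subgroup.subset_closure (Or.inl ⟨_, rfl⟩)) g
  have key : ∀ (y x : FreeGroup I) (a c : ℕ),
      mtι Φ y * ((mtT Φ ^ a)⁻¹ * mtι Φ x * mtT Φ ^ c) =
        (mtT Φ ^ a)⁻¹ * mtι Φ ((⇑Φ)^[a] y * x) * mtT Φ ^ c := by
    intro y x a c
    rw [map_mul, ← mt_conj_pow]
    group
  induction hg using Subgroup.closure_induction_left with
  | one => exact ⟨0, 0, 1, by simp⟩
  | mul_left u hu v _ ih =>
    obtain ⟨a, c, x, rfl⟩ := ih
    rcases hu with ⟨y, rfl⟩ | rfl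
    · exact ⟨a, c, _, key y x a c⟩
    · cases a with
      | zero =>
        refine ⟨0, c + 1, Φ x, ?_⟩
        rw [← mt_conj, pow_succ']
        simp [mul_assoc]
      | succ a =>
        refine ⟨a, c, x, ?_⟩
        rw [pow_succ, mul_inv_rev]
        simp [mul_assoc]
  | inv_mul_cancel u hu v _ ih =>
    obtain ⟨a, c, x, rfl⟩ := ih
    rcases hu with ⟨y, rfl⟩ | rfl
    · rw [← map_inv]
      exact ⟨a, c, _, key _ x a c⟩
    · refine ⟨a + 1, c, x, ?_⟩
      rw [pow_succ, mul_inv_rev]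
      simp [mul_assoc]

/-- Fix `m ≥ 1` and `b ∈ 𝔽`, and let `Θ(x) = b · Φᵐ(x) · b⁻¹`. Then `Θ` is an injective
endomorphism of `𝔽`, and there is an isomorphism from `M(Θ)` onto the subgroup
`⟨ι(𝔽), tᵐ⟩` of `M(Φ)` sending `s ↦ ι(b) · tᵐ` and each generator `eᵢ` of `M(Θ)`
to `ι(eᵢ)`. -/
theorem mappingTorus_of_twisted_power {I : Type} (Φ : FreeGroup I →* FreeGroup I)
    (hΦ : Function.Injective Φ) (m : ℕ) (hm : 1 ≤ m) (b : FreeGroup I)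
    (Θ : FreeGroup I →* FreeGroup I)
    (hΘ : ∀ x : FreeGroup I, Θ x = b * (⇑Φ)^[m] x * b⁻¹) :
    Function.Injective Θ ∧
    ∃ e : MT Θ ≃*
        (Subgroup.closure (Set.range (mtι Φ) ∪ {(mtT Φ) ^ m}) : Subgroup (MT Φ)),
      ((e (mtT Θ) : Subgroup.closure (Set.range (mtι Φ) ∪ {(mtT Φ) ^ m})) : MT Φ) =
          mtι Φ b * (mtT Φ) ^ m ∧
      ∀ i : I,
        ((e (mtι Θ (FreeGroup.of i)) :
            Subgroup.closure (Set.range (mtι Φ) ∪ {(mtT Φ) ^ m})) : MT Φ) =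
          mtι Φ (FreeGroup.of i) := by
  have hinj : Function.Injective Θ := by
    intro x y hxy
    rw [hΘ, hΘ] at hxy
    exact hΦ.iterate m (mul_left_cancel (mul_right_cancel hxy))
  refine ⟨hinj, ?_⟩
  obtain ⟨F, hFt, hFi⟩ := mt_lift Θ (mtι Φ) (mtι Φ b * mtT Φ ^ m) (by
    intro x
    rw [hΘ, map_mul, map_mul, ← mt_conj_pow, map_inv]
    group)
  obtain ⟨D, hDt, hDi⟩ := mt_lift Φ (G := Multiplicative ℤ) 1 (Multiplicative.ofAdd 1)
    (by simp)
  have hF : Function.Injective F := by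
    rw [injective_iff_map_eq_one]
    intro g hg
    obtain ⟨a, c, x, rfl⟩ := mt_form Θ g
    have hac : a = c := by
      have h1 := congrArg (fun z => Multiplicative.toAdd (D z)) hg
      simp [hFt, hFi, hDt, hDi] at h1
      have hm' : (m : ℤ) ≠ 0 := by exact_mod_cast (by omega : m ≠ 0)
      have h2 : (m : ℤ) * ((c : ℤ) - a) = 0 := by linarith
      rcases mul_eq_zero.1 h2 with h | h
      · exact absurd h hm'
      · omega
    subst hac
    have hx : mtι Φ x = 1 := by
      rw [map_mul, map_mul, map_inv, hFi] at hg
      have := congrArg (fun z => F (mtT Θ ^ a) * z * (F (mtT Θ ^ a))⁻¹) hg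
      simpa [mul_assoc] using this
    have : x = 1 := mtι_injective Φ hΦ (by rw [hx, map_one])
    simp [this]
  have hrange : F.range = Subgroup.closure (Set.range (mtι Φ) ∪ {(mtT Φ) ^ m}) := by
    apply le_antisymm
    · rintro _ ⟨g, rfl⟩
      refine mt_gen_induction Θ
        ((Subgroup.closure (Set.range (mtι Φ) ∪ {(mtT Φ) ^ m})).comap F) ?_ ?_ g
      · rw [Subgroup.mem_comap, hFt]
        exact mul_mem (Subgroup.subset_closure (Or.inl ⟨_, rfl⟩))
          (Subgroup.subset_closure (Or.inr rfl))
      · intro i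
        rw [Subgroup.mem_comap, hFi]
        exact Subgroup.subset_closure (Or.inl ⟨_, rfl⟩)
    · rw [Subgroup.closure_le]
      rintro _ (⟨x, rfl⟩ | rfl)
      · exact ⟨mtι Θ x, hFi x⟩
      · refine ⟨(mtι Θ b)⁻¹ * mtT Θ, ?_⟩
        rw [map_mul, map_inv, hFi, hFt]
        group
  exact ⟨(MonoidHom.ofInjective hF).trans (MulEquiv.subgroupCongr hrange), hFt,
    fun i => hFi _⟩
end

section
/- For every d ≥ 0 and every generator x ∈ A ∪ B, the element t^d x t^{-d} of F can be written as n·v with n ∈ N and v ∈ ⟨S'_d⟩, where S'_d = A ∪ ⋃_{l=0}^{d} t^l B t^{-l}. -/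
/-- The free group `F` on the disjoint union `{t} ∪ A ∪ B` with `A = {a₁, …, a_m}` and
`B = {b₁, …, b_r}`: `none` is `t`, `some (Sum.inl j)` is `a_j`, `some (Sum.inr k)` is `b_k`. -/
abbrev FG (m r : ℕ) : Type := FreeGroup (Option (Fin m ⊕ Fin r))

/-- The generator `t` of `F`. -/
def tGen (m r : ℕ) : FG m r := FreeGroup.of none

/-- The generator `a_j` of `F`. -/
def aGen (m r : ℕ) (j : Fin m) : FG m r := FreeGroup.of (some (Sum.inl j))

/-- The generator `b_k` of `F`. -/
def bGen (m r : ℕ) (k : Fin r) : FG m r := FreeGroup.of (some (Sum.inr k))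

/-- The normal closure `N` in `F` of the finite set `{t a_j t⁻¹ w_j⁻¹ : 1 ≤ j ≤ m}`. -/
def Nsub (m r : ℕ) (w : Fin m → FG m r) : Subgroup (FG m r) :=
  Subgroup.normalClosure (Set.range fun j : Fin m =>
    tGen m r * aGen m r j * (tGen m r)⁻¹ * (w j)⁻¹)

/-- The set `S'_d = A ∪ ⋃_{0 ≤ l ≤ d} tˡ B t⁻ˡ ⊆ F`. -/
def Sset (m r : ℕ) (d : ℕ) : Set (FG m r) :=
  Set.range (aGen m r) ∪
    {y | ∃ l : ℕ, l ≤ d ∧ ∃ k : Fin r, y = (tGen m r) ^ l * bGen m r k * ((tGen m r) ^ l)⁻¹}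

/-- Auxiliary form: conjugates by `tᵈ` of elements of `⟨A ∪ B⟩` lie in `N ⊔ ⟨S'_d⟩`. -/
theorem conj_mem_sup_aux (m r : ℕ) (w : Fin m → FG m r)
    (hw : ∀ j : Fin m,
      w j ∈ Subgroup.closure (Set.range (aGen m r) ∪ Set.range (bGen m r)))
    (d : ℕ) : ∀ x ∈ Subgroup.closure (Set.range (aGen m r) ∪ Set.range (bGen m r)),
      (tGen m r) ^ d * x * ((tGen m r) ^ d)⁻¹ ∈
        Nsub m r w ⊔ Subgroup.closure (Sset m r d) := by
  have key : ∀ d : ℕ,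
      (∀ x ∈ Set.range (aGen m r) ∪ Set.range (bGen m r),
        (tGen m r) ^ d * x * ((tGen m r) ^ d)⁻¹ ∈
          Nsub m r w ⊔ Subgroup.closure (Sset m r d)) →
      ∀ x ∈ Subgroup.closure (Set.range (aGen m r) ∪ Set.range (bGen m r)),
        (tGen m r) ^ d * x * ((tGen m r) ^ d)⁻¹ ∈
          Nsub m r w ⊔ Subgroup.closure (Sset m r d) := by
    intro d h x hx
    have hle : Subgroup.closure (Set.range (aGen m r) ∪ Set.range (bGen m r)) ≤
        (Nsub m r w ⊔ Subgroup.closure (Sset m r d)).comap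
          (MulAut.conj ((tGen m r) ^ d)).toMonoidHom := by
      rw [Subgroup.closure_le]
      intro y hy
      exact h y hy
    exact hle hx
  have hb : ∀ (d : ℕ) (k : Fin r), (tGen m r) ^ d * bGen m r k * ((tGen m r) ^ d)⁻¹ ∈
      Nsub m r w ⊔ Subgroup.closure (Sset m r d) := fun d k =>
    Subgroup.mem_sup_right (Subgroup.subset_closure (Or.inr ⟨d, le_rfl, k, rfl⟩))
  induction d with
  | zero =>
    apply key
    rintro x (⟨j, rfl⟩ | ⟨k, rfl⟩)
    · have h0 : aGen m r j ∈ Nsub m r w ⊔ Subgroup.closure (Sset m r 0) :=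
        Subgroup.mem_sup_right (Subgroup.subset_closure (Or.inl ⟨j, rfl⟩))
      simpa using h0
    · exact hb 0 k
  | succ d ih =>
    apply key
    rintro x (⟨j, rfl⟩ | ⟨k, rfl⟩)
    · have hmono : Nsub m r w ⊔ Subgroup.closure (Sset m r d) ≤
          Nsub m r w ⊔ Subgroup.closure (Sset m r (d + 1)) := by
        refine sup_le_sup_left (Subgroup.closure_mono ?_) _
        rintro y (hy | ⟨l, hl, k, rfl⟩)
        · exact Or.inl hy
        · exact Or.inr ⟨l, by omega, k, rfl⟩
      have hN : (Nsub m r w).Normal := Subgroup.normalClosure_normal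
      have h1 : tGen m r * aGen m r j * (tGen m r)⁻¹ * (w j)⁻¹ ∈ Nsub m r w :=
        Subgroup.subset_normalClosure ⟨j, rfl⟩
      have h2 := hN.conj_mem _ h1 ((tGen m r) ^ d)
      have h3 := mul_mem (Subgroup.mem_sup_left h2) (hmono (ih _ (hw j)))
      convert h3 using 1
      rw [pow_succ]
      group
    · exact hb (d + 1) k

/-- For every `d ≥ 0` and every generator `x ∈ A ∪ B`, the element `tᵈ x t⁻ᵈ` of `F` can be
written as `n · v` with `n ∈ N` and `v ∈ ⟨S'_d⟩`. -/
theorem conjugated_generator_factorization (m r : ℕ) (w : Fin m → FG m r)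
    (hw : ∀ j : Fin m,
      w j ∈ Subgroup.closure (Set.range (aGen m r) ∪ Set.range (bGen m r)))
    (d : ℕ) (x : FG m r) (hx : x ∈ Set.range (aGen m r) ∪ Set.range (bGen m r)) :
    ∃ n ∈ Nsub m r w, ∃ v ∈ Subgroup.closure (Sset m r d),
      (tGen m r) ^ d * x * ((tGen m r) ^ d)⁻¹ = n * v := by
  have hN : (Nsub m r w).Normal := Subgroup.normalClosure_normal
  have h := conj_mem_sup_aux m r w hw d x (Subgroup.subset_closure hx)
  obtain ⟨n, hn, v, hv, e⟩ := Subgroup.mem_sup_of_normal_left.mp h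
  exact ⟨n, hn, v, hv, e.symm⟩
end

section
/- For every element k of F whose exponent sum in the generator t is zero, there exist an integer z, a natural number d ≥ 0, an element n ∈ N, and an element v ∈ ⟨S'_d⟩ such that t^z k t^{-z} = n·v. -/
/-- The exponent sum in `t`, i.e. the homomorphism `F → ℤ` (written multiplicatively) sending
`t ↦ 1` and each element of `A ∪ B` to `0`. -/
def expT (m r : ℕ) : FG m r →* Multiplicative ℤ :=
  FreeGroup.lift fun o : Option (Fin m ⊕ Fin r) =>
    o.elim (Multiplicative.ofAdd 1) (fun _ => 1)

/-- The subgroup generated by `N` and all the sets `S'_d`. -/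
def Hsub (m r : ℕ) (w : Fin m → FG m r) : Subgroup (FG m r) :=
  Nsub m r w ⊔ Subgroup.closure (⋃ d, Sset m r d)

lemma Sset_mono (m r : ℕ) : Monotone (Sset m r) := by
  intro d e hde x hx
  rcases hx with hx | ⟨l, hl, k, rfl⟩
  · exact Or.inl hx
  · exact Or.inr ⟨l, hl.trans hde, k, rfl⟩

lemma a_mem_H (m r : ℕ) (w : Fin m → FG m r) (j : Fin m) : aGen m r j ∈ Hsub m r w :=
  Subgroup.mem_sup_right (Subgroup.subset_closure (Set.mem_iUnion.2 ⟨0, Or.inl ⟨j, rfl⟩⟩))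

lemma tb_mem_H (m r : ℕ) (w : Fin m → FG m r) (l : ℕ) (k : Fin r) :
    (tGen m r) ^ l * bGen m r k * ((tGen m r) ^ l)⁻¹ ∈ Hsub m r w :=
  Subgroup.mem_sup_right (Subgroup.subset_closure
    (Set.mem_iUnion.2 ⟨l, Or.inr ⟨l, le_rfl, k, rfl⟩⟩))

lemma w_mem_H (m r : ℕ) (w : Fin m → FG m r)
    (hw : ∀ j : Fin m,
      w j ∈ Subgroup.closure (Set.range (aGen m r) ∪ Set.range (bGen m r))) (j : Fin m) :
    w j ∈ Hsub m r w := by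
  refine (Subgroup.closure_le _).2 ?_ (hw j)
  rintro _ (⟨i, rfl⟩ | ⟨i, rfl⟩)
  · exact a_mem_H m r w i
  · simpa using tb_mem_H m r w 0 i

lemma conj_H (m r : ℕ) (w : Fin m → FG m r)
    (hw : ∀ j : Fin m,
      w j ∈ Subgroup.closure (Set.range (aGen m r) ∪ Set.range (bGen m r)))
    (x : FG m r) (hx : x ∈ Hsub m r w) : tGen m r * x * (tGen m r)⁻¹ ∈ Hsub m r w := by
  have key : Hsub m r w ≤ (Hsub m r w).comap (MulAut.conj (tGen m r)).toMonoidHom := by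
    refine sup_le ?_ ((Subgroup.closure_le _).2 ?_)
    · intro n hn
      have hN : (Nsub m r w).Normal := Subgroup.normalClosure_normal
      exact Subgroup.mem_sup_left (hN.conj_mem n hn _)
    · intro y hy
      obtain ⟨d, hd⟩ := Set.mem_iUnion.1 hy
      rcases hd with ⟨j, rfl⟩ | ⟨l, hl, k, rfl⟩
      · have h1 : tGen m r * aGen m r j * (tGen m r)⁻¹ * (w j)⁻¹ ∈ Hsub m r w :=
          Subgroup.mem_sup_left (Subgroup.subset_normalClosure ⟨j, rfl⟩)
        have h2 := mul_mem h1 (w_mem_H m r w hw j)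
        rw [inv_mul_cancel_right] at h2
        exact h2
      · have h := tb_mem_H m r w (l + 1) k
        have e : tGen m r * (tGen m r ^ l * bGen m r k * (tGen m r ^ l)⁻¹) * (tGen m r)⁻¹
            = tGen m r ^ (l + 1) * bGen m r k * (tGen m r ^ (l + 1))⁻¹ := by
          rw [pow_succ']; group
        rw [← e] at h
        exact h
  exact key hx

lemma conj_pow_H (m r : ℕ) (w : Fin m → FG m r)
    (hw : ∀ j : Fin m,
      w j ∈ Subgroup.closure (Set.range (aGen m r) ∪ Set.range (bGen m r)))
    (x : FG m r) (hx : x ∈ Hsub m r w) (l : ℕ) :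
    tGen m r ^ l * x * (tGen m r ^ l)⁻¹ ∈ Hsub m r w := by
  induction l with
  | zero => simpa using hx
  | succ l ih =>
    have h := conj_H m r w hw _ ih
    rw [pow_succ']
    simpa [mul_assoc] using h

lemma main_H (m r : ℕ) (w : Fin m → FG m r)
    (hw : ∀ j : Fin m,
      w j ∈ Subgroup.closure (Set.range (aGen m r) ∪ Set.range (bGen m r)))
    (k : FG m r) : ∃ z₀ : ℤ, ∀ z : ℤ, z₀ ≤ z →
      tGen m r ^ z * k * tGen m r ^ (-(expT m r k).toAdd - z) ∈ Hsub m r w := by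
  have gen : ∀ o, ∃ z₀ : ℤ, ∀ z : ℤ, z₀ ≤ z → tGen m r ^ z * FreeGroup.of o *
      tGen m r ^ (-(expT m r (FreeGroup.of o)).toAdd - z) ∈ Hsub m r w := by
    intro o
    refine ⟨0, fun z hz => ?_⟩
    obtain ⟨l, rfl⟩ := Int.eq_ofNat_of_zero_le hz
    rcases o with _ | j | j
    · have : tGen m r ^ (l : ℤ) * FreeGroup.of none *
        tGen m r ^ (-(expT m r (FreeGroup.of none)).toAdd - (l : ℤ)) = 1 := by
        have e : (expT m r (FreeGroup.of none)).toAdd = 1 := by simp [expT]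
        rw [e]
        change tGen m r ^ (l : ℤ) * tGen m r * _ = 1
        group
      rw [this]; exact one_mem _
    · have e : (expT m r (FreeGroup.of (some (Sum.inl j)))).toAdd = 0 := by simp [expT]
      rw [e]
      simpa [aGen] using conj_pow_H m r w hw _ (a_mem_H m r w j) l
    · have e : (expT m r (FreeGroup.of (some (Sum.inr j)))).toAdd = 0 := by simp [expT]
      rw [e]
      simpa [bGen] using tb_mem_H m r w l j
  have inv : ∀ x : FG m r, (∃ z₀ : ℤ, ∀ z : ℤ, z₀ ≤ z →
      tGen m r ^ z * x * tGen m r ^ (-(expT m r x).toAdd - z) ∈ Hsub m r w) →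
      ∃ z₀ : ℤ, ∀ z : ℤ, z₀ ≤ z →
      tGen m r ^ z * x⁻¹ * tGen m r ^ (-(expT m r x⁻¹).toAdd - z) ∈ Hsub m r w := by
    rintro x ⟨z₀, h⟩
    refine ⟨z₀ + (expT m r x).toAdd, fun z hz => ?_⟩
    have h' := inv_mem (h (z - (expT m r x).toAdd) (by linarith))
    rw [map_inv, toAdd_inv]
    generalize (expT m r x).toAdd = e at *
    convert h' using 1
    group
  induction k using FreeGroup.induction_on with
  | C1 => exact ⟨0, fun z _ => by simp⟩
  | of o => exact gen o
  | inv_of o h => exact inv _ h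
  | mul x y hx hy =>
    obtain ⟨a, ha⟩ := hx
    obtain ⟨b, hb⟩ := hy
    refine ⟨max a (b - (expT m r x).toAdd), fun z hz => ?_⟩
    have h1 := ha z (le_trans (le_max_left _ _) hz)
    have h2 := hb (z + (expT m r x).toAdd) (by linarith [le_trans (le_max_right _ _) hz])
    rw [map_mul, toAdd_mul]
    generalize (expT m r x).toAdd = e at *
    generalize (expT m r y).toAdd = f at *
    convert mul_mem h1 h2 using 1
    group

/-- For every element `k` of `F` whose exponent sum in `t` is zero, there exist `z ∈ ℤ`,
`d ≥ 0`, `n ∈ N` and `v ∈ ⟨S'_d⟩` with `tᶻ k t⁻ᶻ = n · v`. -/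
theorem zero_exponent_sum_factorization (m r : ℕ) (w : Fin m → FG m r)
    (hw : ∀ j : Fin m,
      w j ∈ Subgroup.closure (Set.range (aGen m r) ∪ Set.range (bGen m r)))
    (k : FG m r) (hk : expT m r k = Multiplicative.ofAdd 0) :
    ∃ (z : ℤ) (d : ℕ), ∃ n ∈ Nsub m r w, ∃ v ∈ Subgroup.closure (Sset m r d),
      (tGen m r) ^ z * k * (tGen m r) ^ (-z) = n * v := by
  obtain ⟨z, hz⟩ := main_H m r w hw k
  have h := hz z le_rfl
  rw [hk] at h
  have hN : (Nsub m r w).Normal := Subgroup.normalClosure_normal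
  obtain ⟨n, hn, v, hv, e⟩ := Subgroup.mem_sup_of_normal_left.1 h
  rw [Subgroup.closure_iUnion] at hv
  obtain ⟨d, hd⟩ := (Subgroup.mem_iSup_of_directed
    (Monotone.directed_le fun a b hab => Subgroup.closure_mono (Sset_mono m r hab))).1 hv
  refine ⟨z, d, n, hn, v, hd, ?_⟩
  rw [e]
  simp
end
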